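/- arXiv:2004.05567 — 2 statements merged into one kernel-verified Lean document; each statement's English description precedes it below -/
import Mathlib

section
/- Let n ∈ ℕ with n ≥ 2 and let q ∈ ℝ satisfy q ≥ max{0, 2-n} or q ≤ min{0, 2-n} (equivalently q(n+q-2) ≥ 0). Then for every a ∈ ℝ and every x ∈ ℝⁿ, ∫_{S^{n-1}} |x - a z|^q dσ(z) ≥ max{|a|, |x|}^q. -/
open MeasureTheory Metric

/-- The normalized rotation-invariant (Haar) probability measure `σ` on the unit
sphere `S^{n-1} ⊆ ℝⁿ`. -/
noncomputable def sphereHaar (n : ℕ) :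
    Measure (sphere (0 : EuclideanSpace ℝ (Fin n)) 1) :=
  ((volume : Measure (EuclideanSpace ℝ (Fin n))).toSphere Set.univ)⁻¹ •
    (volume : Measure (EuclideanSpace ℝ (Fin n))).toSphere

open Set Filter Topology Function

theorem hasDerivAt_integral_of_continuousOn {X : Type*} [TopologicalSpace X] [CompactSpace X]
    [MeasurableSpace X] [OpensMeasurableSpace X] (μ : Measure X) [IsFiniteMeasure μ]
    {F F' : ℝ → X → ℝ} {U : Set ℝ} (hU : IsOpen U)
    (hF : ContinuousOn (uncurry F) (U ×ˢ univ)) (hF' : ContinuousOn (uncurry F') (U ×ˢ univ))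
    (hd : ∀ s ∈ U, ∀ x, HasDerivAt (F · x) (F' s x) s) {s₀ : ℝ} (hs₀ : s₀ ∈ U) :
    HasDerivAt (fun s ↦ ∫ x, F s x ∂μ) (∫ x, F' s₀ x ∂μ) s₀ := by
  have slice : ∀ {G : ℝ → X → ℝ}, ContinuousOn (uncurry G) (U ×ˢ univ) →
      ∀ s ∈ U, Continuous (G s) := fun hG s hs ↦
    hG.comp_continuous (f := fun x ↦ (s, x)) (by fun_prop) (by simp [hs])
  obtain ⟨ε, hε, hεU⟩ := Metric.nhds_basis_closedBall.mem_iff.1 (hU.mem_nhds hs₀)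
  obtain ⟨C, hC⟩ := ((isCompact_closedBall s₀ ε).prod (isCompact_univ (X := X)))
    |>.exists_bound_of_continuousOn (hF'.mono (prod_mono_left hεU))
  refine (hasDerivAt_integral_of_dominated_loc_of_deriv_le (bound := fun _ ↦ C)
    (closedBall_mem_nhds s₀ hε) ?_ ?_ (slice hF' s₀ hs₀).aestronglyMeasurable ?_
    (integrable_const C) ?_).2
  · filter_upwards [hU.mem_nhds hs₀] with s hs using (slice hF s hs).aestronglyMeasurable
  · exact (slice hF s₀ hs₀).integrable_of_hasCompactSupport
      (HasCompactSupport.of_compactSpace _)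
  · exact .of_forall fun x s hs ↦ hC (s, x) ⟨hs, mem_univ x⟩
  · exact .of_forall fun x s hs ↦ hd s (hεU hs) x

section Sphere

variable {E : Type*} [NormedAddCommGroup E] [InnerProductSpace ℝ E]

/-- A linear isometry equivalence, restricted to the unit sphere. -/
def LinearIsometryEquiv.sphereMap (g : E ≃ₗᵢ[ℝ] E) (z : sphere (0 : E) 1) : sphere (0 : E) 1 :=
  ⟨g z, by simp⟩

theorem LinearIsometryEquiv.continuous_sphereMap (g : E ≃ₗᵢ[ℝ] E) : Continuous g.sphereMap :=
  (g.continuous.comp continuous_subtype_val).subtype_mk _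

open scoped Pointwise in
theorem measurePreserving_sphereMap_toSphere [FiniteDimensional ℝ E] [MeasurableSpace E]
    [BorelSpace E] (g : E ≃ₗᵢ[ℝ] E) :
    MeasurePreserving g.sphereMap (volume : Measure E).toSphere
      (volume : Measure E).toSphere := by
  refine ⟨g.continuous_sphereMap.measurable, Measure.ext fun s hs ↦ ?_⟩
  rw [Measure.map_apply g.continuous_sphereMap.measurable hs, Measure.toSphere_apply' _ hs,
    Measure.toSphere_apply' _ (g.continuous_sphereMap.measurable hs)]
  congr 1
  rw [← g.measurePreserving.measure_preimage_emb g.toHomeomorph.measurableEmbedding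
    (Ioo (0 : ℝ) 1 • (_ '' s))]
  congr 1
  ext y
  simp only [Set.mem_smul, mem_image, mem_preimage, Subtype.exists, exists_and_right, exists_eq_right,
    mem_sphere_zero_iff_norm]
  constructor
  · rintro ⟨r, hr, w, ⟨hw, hws⟩, rfl⟩
    exact ⟨r, hr, g w, ⟨by simpa using hw, hws⟩, by simp⟩
  · rintro ⟨r, hr, w, ⟨hw, hws⟩, h⟩
    refine ⟨r, hr, g.symm w, ⟨by simpa using hw, ?_⟩, ?_⟩
    · simpa [LinearIsometryEquiv.sphereMap] using hws
    · apply g.injective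
      simpa using h

theorem exists_planeRotation [FiniteDimensional ℝ E] {e v : E} (he : ‖e‖ = 1) (hv : ‖v‖ = 1)
    (hev : inner ℝ e v = 0) (θ : ℝ) :
    ∃ g : E ≃ₗᵢ[ℝ] E, ∀ z,
      inner ℝ e (g z) = Real.cos θ * inner ℝ e z - Real.sin θ * inner ℝ v z ∧
      inner ℝ v (g z) = Real.sin θ * inner ℝ e z + Real.cos θ * inner ℝ v z := by
  have hee : inner ℝ e e = 1 := by simp [he]
  have hvv : inner ℝ v v = 1 := by simp [hv]
  have hve : inner ℝ v e = 0 := by rw [real_inner_comm, hev]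
  let A : E →ₗ[ℝ] E := LinearMap.id +
    ((Real.cos θ - 1) • innerₛₗ ℝ e - Real.sin θ • innerₛₗ ℝ v).smulRight e +
    (Real.sin θ • innerₛₗ ℝ e + (Real.cos θ - 1) • innerₛₗ ℝ v).smulRight v
  have hA : ∀ z, A z = z +
      ((Real.cos θ - 1) * inner ℝ e z - Real.sin θ * inner ℝ v z) • e +
      (Real.sin θ * inner ℝ e z + (Real.cos θ - 1) * inner ℝ v z) • v := fun z ↦ by simp [A]
  have hn : ∀ z, ‖A z‖ = ‖z‖ := fun z ↦ by
    rw [← sq_eq_sq₀ (norm_nonneg _) (norm_nonneg _), ← real_inner_self_eq_norm_sq,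
      ← real_inner_self_eq_norm_sq, hA]
    simp only [inner_add_left, inner_add_right, real_inner_smul_left, real_inner_smul_right, hee,
      hvv, hev, hve, real_inner_comm e z, real_inner_comm v z]
    linear_combination (inner ℝ e z ^ 2 + inner ℝ v z ^ 2) * Real.sin_sq_add_cos_sq θ
  refine ⟨LinearIsometry.toLinearIsometryEquiv ⟨A, hn⟩ rfl, fun z ↦ ?_⟩
  simp only [LinearIsometry.toLinearIsometryEquiv_apply]
  change inner ℝ e (A z) = _ ∧ inner ℝ v (A z) = _
  rw [hA]
  simp only [inner_add_right, real_inner_smul_right, hee, hvv, hev, hve]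
  constructor <;> ring

theorem inner_mem_Icc_of_sphere {e : E} (he : ‖e‖ = 1) (z : sphere (0 : E) 1) :
    inner ℝ e (z : E) ∈ Icc (-1 : ℝ) 1 := by
  have h := abs_real_inner_le_norm e z
  rw [he, norm_eq_of_mem_sphere z, one_mul] at h
  exact abs_le.1 h

end Sphere

section SphereHaar

variable {n : ℕ}

instance : IsFiniteMeasure (sphereHaar n) := by
  unfold sphereHaar
  rcases eq_or_ne ((volume : Measure (EuclideanSpace ℝ (Fin n))).toSphere univ) 0 with h | h
  · rw [Measure.measure_univ_eq_zero.1 h]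
    simp only [smul_zero]
    infer_instance
  · exact Measure.smul_finite _ (ENNReal.inv_ne_top.2 h)

theorem isProbabilityMeasure_sphereHaar (hn : n ≠ 0) : IsProbabilityMeasure (sphereHaar n) := by
  have : NeZero n := ⟨hn⟩
  refine ⟨?_⟩
  rw [sphereHaar, Measure.smul_apply, smul_eq_mul]
  exact ENNReal.inv_mul_cancel (by simp [-Measure.toSphere_apply_univ]) (measure_ne_top _ _)

theorem measurePreserving_sphereMap
    (g : EuclideanSpace ℝ (Fin n) ≃ₗᵢ[ℝ] EuclideanSpace ℝ (Fin n)) :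
    MeasurePreserving g.sphereMap (sphereHaar n) (sphereHaar n) :=
  (measurePreserving_sphereMap_toSphere g).smul_measure _

theorem integral_comp_sphereMap
    (g : EuclideanSpace ℝ (Fin n) ≃ₗᵢ[ℝ] EuclideanSpace ℝ (Fin n))
    {f : sphere (0 : EuclideanSpace ℝ (Fin n)) 1 → ℝ} (hf : Continuous f) :
    ∫ z, f (g.sphereMap z) ∂sphereHaar n = ∫ z, f z ∂sphereHaar n := by
  have h := measurePreserving_sphereMap g
  conv_rhs => rw [← h.map_eq]
  exact (integral_map h.measurable.aemeasurable hf.aestronglyMeasurable).symm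

theorem Continuous.integrable_sphereHaar {f : sphere (0 : EuclideanSpace ℝ (Fin n)) 1 → ℝ}
    (hf : Continuous f) : Integrable f (sphereHaar n) :=
  hf.integrable_of_hasCompactSupport (HasCompactSupport.of_compactSpace _)

/-- The infinitesimal form of the invariance of `sphereHaar` under rotations in the plane spanned
by `e` and `v`. -/
theorem integral_inner_mul_eq_integral_sq_inner_mul_deriv {e v : EuclideanSpace ℝ (Fin n)}
    (he : ‖e‖ = 1) (hv : ‖v‖ = 1) (hev : inner ℝ e v = 0) {g g' : ℝ → ℝ}
    (hg : ∀ t ∈ Icc (-1 : ℝ) 1, HasDerivAt g (g' t) t) (hg' : ContinuousOn g' (Icc (-1) 1)) :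
    ∫ z, inner ℝ e z.1 * g (inner ℝ e z.1) ∂sphereHaar n =
      ∫ z, inner ℝ v z.1 ^ 2 * g' (inner ℝ e z.1) ∂sphereHaar n := by
  let P : ℝ → sphere (0 : EuclideanSpace ℝ (Fin n)) 1 → ℝ := fun θ z ↦
    Real.cos θ * inner ℝ e z.1 - Real.sin θ * inner ℝ v z.1
  let Q : ℝ → sphere (0 : EuclideanSpace ℝ (Fin n)) 1 → ℝ := fun θ z ↦
    Real.sin θ * inner ℝ e z.1 + Real.cos θ * inner ℝ v z.1
  have hP : Continuous (uncurry P) := by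
    change Continuous fun x : ℝ × _ ↦ P x.1 x.2
    fun_prop
  have hQ : Continuous (uncurry Q) := by
    change Continuous fun x : ℝ × _ ↦ Q x.1 x.2
    fun_prop
  have hPmem : ∀ θ z, P θ z ∈ Icc (-1 : ℝ) 1 := fun θ z ↦ by
    obtain ⟨R, hR⟩ := exists_planeRotation he hv hev θ
    have := inner_mem_Icc_of_sphere he (R.sphereMap z)
    rwa [LinearIsometryEquiv.sphereMap, (hR z).1] at this
  have hgc : ContinuousOn g (Icc (-1) 1) := fun t ht ↦ (hg t ht).continuousAt.continuousWithinAt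
  have hgP : Continuous fun x : ℝ × _ ↦ g (P x.1 x.2) :=
    hgc.comp_continuous hP fun x ↦ hPmem x.1 x.2
  have hgP' : Continuous fun x : ℝ × _ ↦ g' (P x.1 x.2) :=
    hg'.comp_continuous hP fun x ↦ hPmem x.1 x.2
  have hge : Continuous fun z : sphere (0 : EuclideanSpace ℝ (Fin n)) 1 ↦ g (inner ℝ e z.1) :=
    hgc.comp_continuous (by fun_prop) (inner_mem_Icc_of_sphere he)
  have hge' : Continuous fun z : sphere (0 : EuclideanSpace ℝ (Fin n)) 1 ↦ g' (inner ℝ e z.1) :=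
    hg'.comp_continuous (by fun_prop) (inner_mem_Icc_of_sphere he)
  have hF' : Continuous (uncurry fun θ z ↦ P θ z * g (P θ z) - Q θ z ^ 2 * g' (P θ z)) :=
    (hP.mul hgP).sub ((hQ.pow 2).mul hgP')
  have key := hasDerivAt_integral_of_continuousOn (sphereHaar n) (U := univ) (s₀ := 0)
    (F := fun θ z ↦ g (P θ z) * Q θ z)
    (F' := fun θ z ↦ P θ z * g (P θ z) - Q θ z ^ 2 * g' (P θ z)) isOpen_univ
    (hgP.mul hQ).continuousOn hF'.continuousOn
    (fun θ _ z ↦ by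
      have hdP : HasDerivAt (P · z) (-Q θ z) θ := by
        refine (((Real.hasDerivAt_cos θ).mul_const (inner ℝ e z.1)).sub
          ((Real.hasDerivAt_sin θ).mul_const (inner ℝ v z.1))).congr_deriv ?_
        simp only [Q]; ring
      have hdQ : HasDerivAt (Q · z) (P θ z) θ := by
        refine (((Real.hasDerivAt_sin θ).mul_const (inner ℝ e z.1)).add
          ((Real.hasDerivAt_cos θ).mul_const (inner ℝ v z.1))).congr_deriv ?_
        simp only [P]; ring
      refine (((hg _ (hPmem θ z)).comp θ hdP).mul hdQ).congr_deriv ?_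
      simp only [comp_apply]
      ring) (mem_univ _)
  have hconst : ∀ θ, ∫ z, g (P θ z) * Q θ z ∂sphereHaar n =
      ∫ z, g (inner ℝ e z.1) * inner ℝ v z.1 ∂sphereHaar n := fun θ ↦ by
    obtain ⟨R, hR⟩ := exists_planeRotation he hv hev θ
    rw [← integral_comp_sphereMap R (hge.fun_mul (by fun_prop))]
    simp only [LinearIsometryEquiv.sphereMap, (hR _).1, (hR _).2, P, Q]
  simp only [hconst] at key
  have h0 := key.unique (hasDerivAt_const _ _)
  simp only [P, Q, Real.cos_zero, Real.sin_zero, one_mul, zero_mul, sub_zero, zero_add] at h0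
  rw [integral_sub (Continuous.integrable_sphereHaar (.fun_mul (by fun_prop) hge))
    (Continuous.integrable_sphereHaar (.fun_mul (by fun_prop) hge'))] at h0
  exact sub_eq_zero.1 h0

/-- The Gegenbauer-type integration by parts formula for zonal functions on the sphere. -/
theorem integral_zonal_by_parts {e : EuclideanSpace ℝ (Fin n)}
    (he : ‖e‖ = 1) {g g' : ℝ → ℝ}
    (hg : ∀ t ∈ Icc (-1 : ℝ) 1, HasDerivAt g (g' t) t) (hg' : ContinuousOn g' (Icc (-1) 1)) :
    (n - 1) * ∫ z, inner ℝ e z.1 * g (inner ℝ e z.1) ∂sphereHaar n =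
      ∫ z, (1 - inner ℝ e z.1 ^ 2) * g' (inner ℝ e z.1) ∂sphereHaar n := by
  have hge' : Continuous fun z : sphere (0 : EuclideanSpace ℝ (Fin n)) 1 ↦ g' (inner ℝ e z.1) :=
    hg'.comp_continuous (by fun_prop) (inner_mem_Icc_of_sphere he)
  have hn : n ≠ 0 := by
    rintro rfl
    simp [Subsingleton.elim e 0] at he
  let i₀ : Fin n := ⟨0, Nat.pos_of_ne_zero hn⟩
  obtain ⟨b, hb⟩ := Orthonormal.exists_orthonormalBasis_extension_of_card_eq (𝕜 := ℝ)
    (E := EuclideanSpace ℝ (Fin n)) (ι := Fin n) (by simp) (v := fun _ ↦ e) (s := {i₀})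
    ⟨fun _ ↦ by simpa using he, fun i j hij ↦
      (hij (Subsingleton.elim i j)).elim⟩
  have hb₀ : b i₀ = e := hb i₀ rfl
  have hsum : ∀ z : sphere (0 : EuclideanSpace ℝ (Fin n)) 1,
      (1 - inner ℝ e z.1 ^ 2) * g' (inner ℝ e z.1) =
        ∑ j ∈ Finset.univ.erase i₀, inner ℝ (b j) z.1 ^ 2 * g' (inner ℝ e z.1) := fun z ↦ by
    have h := b.sum_sq_norm_inner_right z.1
    rw [← Finset.add_sum_erase _ _ (Finset.mem_univ i₀), hb₀, norm_eq_of_mem_sphere z] at h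
    simp only [Real.norm_eq_abs, sq_abs] at h
    rw [← Finset.sum_mul]
    linear_combination -g' (inner ℝ e z.1) * h
  simp only [hsum]
  rw [integral_finsetSum _ fun j _ ↦ Continuous.integrable_sphereHaar (.fun_mul (by fun_prop) hge'),
    Finset.sum_congr rfl fun j hj ↦ (integral_inner_mul_eq_integral_sq_inner_mul_deriv he
      (b.norm_eq_one j) (by
        rw [← hb₀]; exact b.orthonormal.2 (Finset.ne_of_mem_erase hj).symm) hg hg').symm]
  rw [Finset.sum_const, Finset.card_erase_of_mem (Finset.mem_univ _), Finset.card_univ,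
    Fintype.card_fin, nsmul_eq_mul, Nat.cast_pred (Nat.pos_of_ne_zero hn)]

end SphereHaar

section Monotonicity

/-- The value of `‖u - a • v‖ ^ 2` for unit vectors `u` and `v` with inner product `t`. -/
def unitSqDist (a t : ℝ) : ℝ := 1 + a ^ 2 - 2 * a * t

theorem unitSqDist_nonneg (a : ℝ) {t : ℝ} (ht : t ∈ Icc (-1 : ℝ) 1) : 0 ≤ unitSqDist a t := by
  unfold unitSqDist
  nlinarith [sq_nonneg (a - t), ht.1, ht.2]

theorem unitSqDist_pos {a t : ℝ} (ha : a ∈ Ioo (-1 : ℝ) 1) (ht : t ∈ Icc (-1 : ℝ) 1) :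
    0 < unitSqDist a t := by
  unfold unitSqDist
  obtain ⟨h1, h2⟩ := ha
  obtain ⟨h3, h4⟩ := ht
  rcases le_total 0 a with h | h <;> nlinarith

theorem hasDerivAt_unitSqDist_rpow_left {a t : ℝ} (p : ℝ) (h : 0 < unitSqDist a t) :
    HasDerivAt (fun s ↦ unitSqDist s t ^ p)
      (2 * p * ((a - t) * unitSqDist a t ^ (p - 1))) a := by
  have : HasDerivAt (fun s ↦ unitSqDist s t) (2 * (a - t)) a := by
    refine (((hasDerivAt_pow 2 a).const_add 1).sub
      (((hasDerivAt_id a).const_mul 2).mul_const t)).congr_deriv ?_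
    norm_num
    ring
  exact (this.rpow_const (.inl h.ne')).congr_deriv (by ring)

theorem hasDerivAt_unitSqDist_rpow_right {a t : ℝ} (p : ℝ) (h : 0 < unitSqDist a t) :
    HasDerivAt (fun s ↦ unitSqDist a s ^ p) (-2 * a * p * unitSqDist a t ^ (p - 1)) t := by
  have : HasDerivAt (fun s ↦ unitSqDist a s) (-(2 * a)) t :=
    (((hasDerivAt_id t).const_mul (2 * a)).const_sub (1 + a ^ 2)).congr_deriv (by ring)
  exact (this.rpow_const (.inl h.ne')).congr_deriv (by ring)

variable {n : ℕ} {e : EuclideanSpace ℝ (Fin n)}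

theorem continuousOn_unitSqDist_rpow (he : ‖e‖ = 1) (p : ℝ) :
    ContinuousOn (fun x : ℝ × sphere (0 : EuclideanSpace ℝ (Fin n)) 1 ↦
      unitSqDist x.1 (inner ℝ e x.2.1) ^ p) (Ioo (-1) 1 ×ˢ univ) := by
  refine ContinuousOn.rpow_const ?_ fun x hx ↦
    .inl (unitSqDist_pos hx.1 (inner_mem_Icc_of_sphere he x.2)).ne'
  unfold unitSqDist
  fun_prop

theorem continuous_unitSqDist_rpow (he : ‖e‖ = 1) {a : ℝ} (ha : a ∈ Ioo (-1 : ℝ) 1) (p : ℝ) :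
    Continuous fun z : sphere (0 : EuclideanSpace ℝ (Fin n)) 1 ↦
      unitSqDist a (inner ℝ e z.1) ^ p :=
  (continuousOn_unitSqDist_rpow he p).comp_continuous (f := fun z ↦ (a, z)) (by fun_prop)
    fun _ ↦ ⟨ha, mem_univ _⟩

theorem hasDerivAt_integral_unitSqDist_rpow (he : ‖e‖ = 1) (p : ℝ) {a : ℝ}
    (ha : a ∈ Ioo (-1 : ℝ) 1) :
    HasDerivAt (fun a ↦ ∫ z, unitSqDist a (inner ℝ e z.1) ^ p ∂sphereHaar n)
      (2 * p * ∫ z, (a - inner ℝ e z.1) * unitSqDist a (inner ℝ e z.1) ^ (p - 1) ∂sphereHaar n)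
      a := by
  rw [← integral_const_mul]
  exact hasDerivAt_integral_of_continuousOn (sphereHaar n) (U := Ioo (-1) 1)
    (F := fun a z ↦ unitSqDist a (inner ℝ e z.1) ^ p)
    (F' := fun a z ↦ 2 * p * ((a - inner ℝ e z.1) * unitSqDist a (inner ℝ e z.1) ^ (p - 1)))
    isOpen_Ioo (continuousOn_unitSqDist_rpow he p)
    (continuousOn_const.mul (.mul (by fun_prop) (continuousOn_unitSqDist_rpow he (p - 1))))
    (fun s hs z ↦
      hasDerivAt_unitSqDist_rpow_left p (unitSqDist_pos hs (inner_mem_Icc_of_sphere he z))) ha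

/-- The divergence theorem for the gradient of a power of the norm, over balls of radius `a`:
the flux through the sphere of radius `a` has derivative the sphere integral of the Laplacian. -/
theorem hasDerivAt_flux_unitSqDist_rpow (hn : 2 ≤ n) (he : ‖e‖ = 1) (p : ℝ) {a : ℝ}
    (ha : a ∈ Ioo (-1 : ℝ) 1) :
    HasDerivAt (fun a ↦ a ^ (n - 1) *
        ∫ z, (a - inner ℝ e z.1) * unitSqDist a (inner ℝ e z.1) ^ (p - 1) ∂sphereHaar n)
      ((n + 2 * p - 2) * a ^ (n - 1) *
        ∫ z, unitSqDist a (inner ℝ e z.1) ^ (p - 1) ∂sphereHaar n) a := by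
  obtain ⟨m, rfl⟩ := Nat.exists_eq_add_of_le' hn
  have hpos : ∀ z : sphere (0 : EuclideanSpace ℝ (Fin (m + 2))) 1,
      0 < unitSqDist a (inner ℝ e z.1) := fun z ↦
    unitSqDist_pos ha (inner_mem_Icc_of_sphere he z)
  have c1 := continuous_unitSqDist_rpow he ha (p - 1)
  have c2 := continuous_unitSqDist_rpow he ha (p - 1 - 1)
  have hK := hasDerivAt_integral_of_continuousOn (sphereHaar (m + 2)) (U := Ioo (-1) 1)
    (F := fun a z ↦ (a - inner ℝ e z.1) * unitSqDist a (inner ℝ e z.1) ^ (p - 1))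
    (F' := fun a z ↦ unitSqDist a (inner ℝ e z.1) ^ (p - 1) +
      2 * (p - 1) * (a - inner ℝ e z.1) ^ 2 * unitSqDist a (inner ℝ e z.1) ^ (p - 1 - 1))
    isOpen_Ioo (.mul (by fun_prop) (continuousOn_unitSqDist_rpow he (p - 1)))
    (.add (continuousOn_unitSqDist_rpow he (p - 1))
      (.mul (by fun_prop) (continuousOn_unitSqDist_rpow he (p - 1 - 1))))
    (fun s hs z ↦ by
      have h := hasDerivAt_unitSqDist_rpow_left (p - 1)
        (unitSqDist_pos hs (inner_mem_Icc_of_sphere he z))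
      exact (((hasDerivAt_id s).sub_const _).mul h).congr_deriv (by simp; ring)) ha
  have ibp := integral_zonal_by_parts he (g := fun t ↦ unitSqDist a t ^ (p - 1))
    (g' := fun t ↦ -2 * a * (p - 1) * unitSqDist a t ^ (p - 1 - 1))
    (fun t ht ↦ hasDerivAt_unitSqDist_rpow_right (p - 1) (unitSqDist_pos ha ht))
    (continuousOn_const.mul (ContinuousOn.rpow_const (by unfold unitSqDist; fun_prop)
      fun t ht ↦ .inl (unitSqDist_pos ha ht).ne'))
  have i1 : Integrable (fun z ↦ unitSqDist a (inner ℝ e z.1) ^ (p - 1)) (sphereHaar (m + 2)) :=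
    c1.integrable_sphereHaar
  have i2 : Integrable (fun z ↦ inner ℝ e z.1 * unitSqDist a (inner ℝ e z.1) ^ (p - 1))
      (sphereHaar (m + 2)) := (Continuous.fun_mul (by fun_prop) c1).integrable_sphereHaar
  have i3 : Integrable (fun z ↦ (1 - inner ℝ e z.1 ^ 2) *
      (-2 * a * (p - 1) * unitSqDist a (inner ℝ e z.1) ^ (p - 1 - 1)))
      (sphereHaar (m + 2)) := (Continuous.fun_mul (by fun_prop)
        (Continuous.fun_mul (by fun_prop) c2)).integrable_sphereHaar
  have lap : a * ∫ z, (unitSqDist a (inner ℝ e z.1) ^ (p - 1) +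
        2 * (p - 1) * (a - inner ℝ e z.1) ^ 2 * unitSqDist a (inner ℝ e z.1) ^ (p - 1 - 1))
        ∂sphereHaar (m + 2) =
      a * (2 * p - 1) * ∫ z, unitSqDist a (inner ℝ e z.1) ^ (p - 1) ∂sphereHaar (m + 2) +
      ∫ z, (1 - inner ℝ e z.1 ^ 2) *
        (-2 * a * (p - 1) * unitSqDist a (inner ℝ e z.1) ^ (p - 1 - 1)) ∂sphereHaar (m + 2) := by
    rw [← integral_const_mul, ← integral_const_mul, ← integral_add (i1.const_mul _) i3]
    refine integral_congr_ae (.of_forall fun z ↦ ?_)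
    simp only
    have h : unitSqDist a (inner ℝ e z.1) ^ (p - 1) =
        unitSqDist a (inner ℝ e z.1) ^ (p - 1 - 1) * unitSqDist a (inner ℝ e z.1) := by
      rw [Real.rpow_sub_one (hpos z).ne' (p - 1), div_mul_cancel₀ _ (hpos z).ne']
    rw [h]
    unfold unitSqDist
    ring
  have hK₀ : ∫ z, (a - inner ℝ e z.1) * unitSqDist a (inner ℝ e z.1) ^ (p - 1)
        ∂sphereHaar (m + 2) =
      a * ∫ z, unitSqDist a (inner ℝ e z.1) ^ (p - 1) ∂sphereHaar (m + 2) -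
        ∫ z, inner ℝ e z.1 * unitSqDist a (inner ℝ e z.1) ^ (p - 1) ∂sphereHaar (m + 2) := by
    simp only [sub_mul]
    rw [integral_sub (i1.const_mul _) i2, integral_const_mul]
  refine ((hasDerivAt_pow (m + 2 - 1) a).mul hK).congr_deriv ?_
  rw [hK₀]
  simp only [Nat.add_succ_sub_one, Nat.add_sub_cancel, pow_succ a m] at ibp ⊢
  push_cast at ibp ⊢
  linear_combination a ^ m * lap - a ^ m * ibp

theorem one_le_integral_unitSqDist_rpow (hn : 2 ≤ n) (he : ‖e‖ = 1) {p : ℝ}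
    (hp : 0 ≤ p * (n + 2 * p - 2)) {a : ℝ} (ha : a ∈ Ico (0 : ℝ) 1) :
    1 ≤ ∫ z, unitSqDist a (inner ℝ e z.1) ^ p ∂sphereHaar n := by
  have := isProbabilityMeasure_sphereHaar (n := n) (by lia)
  have hsub : Ico (0 : ℝ) 1 ⊆ Ioo (-1) 1 := fun x hx ↦ ⟨by linarith [hx.1], hx.2⟩
  have hflux := fun s (hs : s ∈ Ico (0 : ℝ) 1) ↦
    (hasDerivAt_flux_unitSqDist_rpow hn he p (hsub hs)).const_mul p
  have hF := fun s (hs : s ∈ Ico (0 : ℝ) 1) ↦ hasDerivAt_integral_unitSqDist_rpow he p (hsub hs)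
  have hint : ∀ s ∈ Ico (0 : ℝ) 1,
      0 ≤ ∫ z, unitSqDist s (inner ℝ e z.1) ^ (p - 1) ∂sphereHaar n := fun s _ ↦
    integral_nonneg fun z ↦
      Real.rpow_nonneg (unitSqDist_nonneg s (inner_mem_Icc_of_sphere he z)) _
  have mono_flux := monotoneOn_of_hasDerivWithinAt_nonneg (convex_Ico (0 : ℝ) 1)
    (fun s hs ↦ (hflux s hs).continuousAt.continuousWithinAt)
    (fun s hs ↦ (hflux s (interior_subset hs)).hasDerivWithinAt) (fun s hs ↦ by
      have hs' := interior_subset hs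
      have := mul_nonneg (mul_nonneg hp (pow_nonneg hs'.1 (n - 1))) (hint s hs')
      linarith)
  have mono := monotoneOn_of_hasDerivWithinAt_nonneg (convex_Ico (0 : ℝ) 1)
    (fun s hs ↦ (hF s hs).continuousAt.continuousWithinAt)
    (fun s hs ↦ (hF s (interior_subset hs)).hasDerivWithinAt) (fun s hs ↦ by
      rw [interior_Ico] at hs
      have h := mono_flux (left_mem_Ico.2 one_pos) (Ioo_subset_Ico_self hs) hs.1.le
      simp only [zero_pow (show n - 1 ≠ 0 by lia), zero_mul, mul_zero] at h
      have := nonneg_of_mul_nonneg_right (b := p * ∫ z, (s - inner ℝ e z.1) *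
        unitSqDist s (inner ℝ e z.1) ^ (p - 1) ∂sphereHaar n) (by linarith)
        (pow_pos hs.1 (n - 1))
      linarith)
  simpa [unitSqDist] using mono (left_mem_Ico.2 one_pos) ha ha.1

end Monotonicity

section Endpoint

variable {n : ℕ} {e : EuclideanSpace ℝ (Fin n)}

open scoped Pointwise in
theorem sphereHaar_singleton (hn : 2 ≤ n) (z : sphere (0 : EuclideanSpace ℝ (Fin n)) 1) :
    sphereHaar n {z} = 0 := by
  have hspan : Submodule.span ℝ {z.1} ≠ ⊤ := fun h ↦ by
    have := finrank_span_singleton (K := ℝ) (ne_zero_of_mem_unit_sphere z)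
    rw [h, finrank_top, finrank_euclideanSpace_fin] at this
    lia
  have hsub : Ioo (0 : ℝ) 1 • ((↑) '' {z} : Set (EuclideanSpace ℝ (Fin n))) ⊆
      Submodule.span ℝ {z.1} := by
    rw [image_singleton]
    rintro _ ⟨r, -, _, rfl, rfl⟩
    exact Submodule.smul_mem _ r (Submodule.mem_span_singleton_self _)
  rw [sphereHaar, Measure.smul_apply, Measure.toSphere_apply' _ (measurableSet_singleton z),
    measure_mono_null hsub (Measure.addHaar_submodule _ _ hspan)]
  simp

theorem ae_inner_ne_one (hn : 2 ≤ n) (he : ‖e‖ = 1) :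
    ∀ᵐ z ∂sphereHaar n, inner ℝ e z.1 ≠ 1 := by
  refine measure_mono_null (fun z hz ↦ ?_)
    (sphereHaar_singleton hn ⟨e, mem_sphere_zero_iff_norm.2 he⟩)
  have hz' : inner ℝ e z.1 = 1 := by simpa using hz
  rw [inner_eq_one_iff_of_norm_eq_one he (norm_eq_of_mem_sphere z)] at hz'
  exact Subtype.ext hz'.symm

theorem one_le_lintegral_unitSqDist_rpow_of_lt_one (hn : 2 ≤ n) (he : ‖e‖ = 1) {p : ℝ}
    (hp : 0 ≤ p * (n + 2 * p - 2)) {a : ℝ} (ha : a ∈ Ico (0 : ℝ) 1) :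
    1 ≤ ∫⁻ z, ENNReal.ofReal (unitSqDist a (inner ℝ e z.1) ^ p) ∂sphereHaar n := by
  rw [← ofReal_integral_eq_lintegral_ofReal
    (continuous_unitSqDist_rpow he ⟨by linarith [ha.1], ha.2⟩ p).integrable_sphereHaar
    (.of_forall fun z ↦ Real.rpow_nonneg (unitSqDist_nonneg a (inner_mem_Icc_of_sphere he z)) _),
    ENNReal.one_le_ofReal]
  exact one_le_integral_unitSqDist_rpow hn he hp ha

theorem one_le_lintegral_unitSqDist_one_rpow (hn : 2 ≤ n) (he : ‖e‖ = 1) {p : ℝ}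
    (hp : 0 ≤ p * (n + 2 * p - 2)) :
    1 ≤ ∫⁻ z, ENNReal.ofReal (unitSqDist 1 (inner ℝ e z.1) ^ p) ∂sphereHaar n := by
  rcases le_or_gt 0 p with h | h
  · have hc : Continuous fun x : ℝ × sphere (0 : EuclideanSpace ℝ (Fin n)) 1 ↦
        unitSqDist x.1 (inner ℝ e x.2.1) ^ p := by
      refine Continuous.rpow_const ?_ fun _ ↦ .inr h
      unfold unitSqDist
      fun_prop
    have hF : Continuous fun a : ℝ ↦ ∫ z, unitSqDist a (inner ℝ e z.1) ^ p ∂sphereHaar n := by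
      simpa using continuous_parametric_integral_of_continuous (μ := sphereHaar n)
        (f := fun a z ↦ unitSqDist a (inner ℝ e z.1) ^ p) hc isCompact_univ
    have hint : Integrable (fun z ↦ unitSqDist 1 (inner ℝ e z.1) ^ p) (sphereHaar n) :=
      (hc.comp (Continuous.prodMk_right 1)).integrable_sphereHaar
    rw [← ofReal_integral_eq_lintegral_ofReal hint
      (.of_forall fun z ↦ Real.rpow_nonneg (unitSqDist_nonneg 1 (inner_mem_Icc_of_sphere he z)) _),
      ENNReal.one_le_ofReal]
    refine ge_of_tendsto ((hF.tendsto 1).mono_left (nhdsWithin_le_nhds (s := Iio 1))) ?_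
    filter_upwards [Ioo_mem_nhdsLT (zero_lt_one' ℝ)] with a ha
    exact one_le_integral_unitSqDist_rpow hn he hp (Ioo_subset_Ico_self ha)
  · have hlim : Tendsto (fun a : ℝ ↦ ENNReal.ofReal (a ^ p) *
        ∫⁻ z, ENNReal.ofReal (unitSqDist 1 (inner ℝ e z.1) ^ p) ∂sphereHaar n) (𝓝[<] 1)
        (𝓝 (1 * ∫⁻ z, ENNReal.ofReal (unitSqDist 1 (inner ℝ e z.1) ^ p) ∂sphereHaar n)) := by
      refine ENNReal.Tendsto.mul_const ?_ (.inl one_ne_zero)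
      have : ContinuousAt (fun a : ℝ ↦ a ^ p) 1 :=
        Real.continuousAt_rpow_const _ _ (.inl one_ne_zero)
      simpa using ENNReal.tendsto_ofReal (this.tendsto.mono_left nhdsWithin_le_nhds)
    rw [one_mul] at hlim
    refine ge_of_tendsto hlim ?_
    filter_upwards [Ioo_mem_nhdsLT (zero_lt_one' ℝ)] with a ha
    refine (one_le_lintegral_unitSqDist_rpow_of_lt_one hn he hp
      (Ioo_subset_Ico_self ha)).trans ?_
    rw [← lintegral_const_mul' _ _ ENNReal.ofReal_ne_top]
    refine lintegral_mono_ae ?_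
    filter_upwards [ae_inner_ne_one hn he] with z hz
    have hlt : inner ℝ e z.1 < 1 := lt_of_le_of_ne (inner_mem_Icc_of_sphere he z).2 hz
    have hpos : 0 < unitSqDist 1 (inner ℝ e z.1) := by
      unfold unitSqDist
      linarith
    rw [← ENNReal.ofReal_mul (Real.rpow_nonneg ha.1.le _), ← Real.mul_rpow ha.1.le hpos.le]
    refine ENNReal.ofReal_le_ofReal
      (Real.rpow_le_rpow_of_nonpos (mul_pos ha.1 hpos) ?_ h.le)
    unfold unitSqDist
    nlinarith [sq_nonneg (1 - a)]

theorem one_le_lintegral_unitSqDist_rpow (hn : 2 ≤ n) (he : ‖e‖ = 1) {p : ℝ}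
    (hp : 0 ≤ p * (n + 2 * p - 2)) {a : ℝ} (ha : a ∈ Icc (0 : ℝ) 1) :
    1 ≤ ∫⁻ z, ENNReal.ofReal (unitSqDist a (inner ℝ e z.1) ^ p) ∂sphereHaar n := by
  rcases ha.2.lt_or_eq with h | rfl
  · exact one_le_lintegral_unitSqDist_rpow_of_lt_one hn he hp ⟨ha.1, h⟩
  · exact one_le_lintegral_unitSqDist_one_rpow hn he hp

end Endpoint

theorem exists_norm_eq_one_smul_eq {E : Type*} [NormedAddCommGroup E] [NormedSpace ℝ E]
    [Nontrivial E] (y : E) : ∃ e : E, ‖e‖ = 1 ∧ y = ‖y‖ • e := by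
  rcases eq_or_ne y 0 with rfl | hy
  · obtain ⟨e, he⟩ := exists_norm_eq E zero_le_one
    exact ⟨e, he, by simp⟩
  · exact ⟨‖y‖⁻¹ • y, norm_smul_inv_norm hy, by rw [smul_inv_smul₀ (norm_ne_zero_iff.2 hy)]⟩

theorem norm_sub_smul_sq_eq_max_sq_mul_unitSqDist {E : Type*} [NormedAddCommGroup E]
    [InnerProductSpace ℝ E] {a : ℝ} {x e z : E} (he : a • x = ‖a • x‖ • e) (hz : ‖z‖ = 1)
    (hM : 0 < max |a| ‖x‖) :
    ‖x - a • z‖ ^ 2 = max |a| ‖x‖ ^ 2 *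
      unitSqDist (min |a| ‖x‖ / max |a| ‖x‖) (inner ℝ e z) := by
  have h : a * inner ℝ x z = |a| * ‖x‖ * inner ℝ e z := by
    rw [← real_inner_smul_left, he, real_inner_smul_left, norm_smul, Real.norm_eq_abs]
  have h1 : max |a| ‖x‖ ^ 2 * unitSqDist (min |a| ‖x‖ / max |a| ‖x‖) (inner ℝ e z) =
      max |a| ‖x‖ ^ 2 + min |a| ‖x‖ ^ 2 -
        2 * (max |a| ‖x‖ * min |a| ‖x‖) * inner ℝ e z := by
    unfold unitSqDist
    field_simp
  have h2 : max |a| ‖x‖ ^ 2 + min |a| ‖x‖ ^ 2 = |a| ^ 2 + ‖x‖ ^ 2 := by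
    rcases le_total |a| ‖x‖ with h | h <;> simp [h, add_comm]
  rw [h1, h2, max_mul_min, norm_sub_sq_real, real_inner_smul_right, norm_smul, hz,
    Real.norm_eq_abs]
  linear_combination -2 * h

theorem stmt_3 (n : ℕ) (hn : 2 ≤ n) (q : ℝ)
    (hq : max 0 (2 - (n : ℝ)) ≤ q ∨ q ≤ min 0 (2 - (n : ℝ)))
    (a : ℝ) (x : EuclideanSpace ℝ (Fin n)) :
    ENNReal.ofReal ((max |a| ‖x‖) ^ q) ≤
      ∫⁻ z : sphere (0 : EuclideanSpace ℝ (Fin n)) 1,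
        ENNReal.ofReal (‖x - a • (z : EuclideanSpace ℝ (Fin n))‖ ^ q) ∂(sphereHaar n) := by
  have := isProbabilityMeasure_sphereHaar (n := n) (by lia)
  have : NeZero n := ⟨by lia⟩
  rcases (le_max_of_le_left (abs_nonneg a) : 0 ≤ max |a| ‖x‖).eq_or_lt with hM | hM
  · have ha : a = 0 := abs_nonpos_iff.1 (hM ▸ le_max_left _ _)
    have hx : x = 0 := norm_le_zero_iff.1 (hM ▸ le_max_right _ _)
    simp [ha, hx]
  obtain ⟨e, he, hae⟩ := exists_norm_eq_one_smul_eq (a • x)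
  have hp : 0 ≤ q / 2 * (n + 2 * (q / 2) - 2) := by
    rw [max_le_iff, le_min_iff] at hq
    rcases hq with ⟨h1, h2⟩ | ⟨h1, h2⟩ <;> nlinarith
  have hρ : min |a| ‖x‖ / max |a| ‖x‖ ∈ Icc (0 : ℝ) 1 :=
    ⟨by positivity, div_le_one_of_le₀ min_le_max hM.le⟩
  have hint : ∀ z : sphere (0 : EuclideanSpace ℝ (Fin n)) 1,
      ENNReal.ofReal (‖x - a • z.1‖ ^ q) = ENNReal.ofReal (max |a| ‖x‖ ^ q) *
        ENNReal.ofReal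
          (unitSqDist (min |a| ‖x‖ / max |a| ‖x‖) (inner ℝ e z.1) ^ (q / 2)) := fun z ↦ by
    have hsq : ∀ {y : ℝ}, 0 ≤ y → (y ^ 2) ^ (q / 2) = y ^ q := fun hy ↦ by
      rw [← Real.rpow_natCast_mul hy]
      congr 1
      push_cast
      ring
    rw [← ENNReal.ofReal_mul (Real.rpow_nonneg hM.le _), ← hsq (norm_nonneg _), ← hsq hM.le,
      norm_sub_smul_sq_eq_max_sq_mul_unitSqDist hae (norm_eq_of_mem_sphere z) hM,
      Real.mul_rpow (sq_nonneg _) (unitSqDist_nonneg _ (inner_mem_Icc_of_sphere he z))]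
  simp only [hint]
  rw [lintegral_const_mul' _ _ ENNReal.ofReal_ne_top]
  exact le_mul_of_one_le_right' (one_le_lintegral_unitSqDist_rpow hn he hp hρ)
end

section
/- Let n ∈ ℕ with n ≥ 2, let p, q ∈ ℝ with 6 ≤ p ≤ q, and let r ∈ ℝ with |r| ≤ √((p+n-2)/(q+n-2)). Then for all x ∈ ℝⁿ and all a ∈ ℝ, (∫_{S^{n-1}} |x + a r y|^q dσ(y))^{1/q} ≤ (∫_{S^{n-1}} |x + a y|^p dσ(y))^{1/p}. -/
open MeasureTheory Metric

theorem hasDerivAt_integral_of_continuous {Ω : Type*} [TopologicalSpace Ω] [CompactSpace Ω]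
    [MeasurableSpace Ω] [BorelSpace Ω] {μ : Measure Ω} [IsFiniteMeasure μ] {F F' : ℝ → Ω → ℝ}
    (hF : Continuous (Function.uncurry F)) (hF' : Continuous (Function.uncurry F'))
    (h : ∀ x y, HasDerivAt (fun x => F x y) (F' x y) x) (x : ℝ) :
    HasDerivAt (fun x => ∫ y, F x y ∂μ) (∫ y, F' x y ∂μ) x := by
  have hc : ∀ x, Continuous (F x) := fun x => hF.comp (by fun_prop : Continuous fun y => (x, y))
  have hc' : ∀ x, Continuous (F' x) := fun x => hF'.comp (by fun_prop : Continuous fun y => (x, y))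
  obtain ⟨C, hC⟩ := ((isCompact_closedBall x 1).prod
    (isCompact_univ (X := Ω))).exists_bound_of_continuousOn hF'.continuousOn
  refine (hasDerivAt_integral_of_dominated_loc_of_deriv_le (bound := fun _ => C)
    (closedBall_mem_nhds x one_pos) (.of_forall fun z => (hc z).aestronglyMeasurable)
    ((hc x).integrable_of_hasCompactSupport (HasCompactSupport.of_compactSpace _))
    (hc' x).aestronglyMeasurable
    (.of_forall fun y z hz => hC (z, y) ⟨hz, Set.mem_univ _⟩) (integrable_const _)
    (.of_forall fun y z _ => h z y)).2

/-- A continuous function on an interval that is nondecreasing wherever it is negative stays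
nonnegative if it starts nonnegative. -/
theorem nonneg_of_deriv_nonneg_of_neg {D D' : ℝ → ℝ} {b : ℝ} (hc : Continuous D) (h0 : 0 ≤ D 0)
    (hd : ∀ x ∈ Set.Ioo 0 b, HasDerivAt D (D' x) x)
    (hD : ∀ x ∈ Set.Ioo 0 b, D x < 0 → 0 ≤ D' x) {x : ℝ} (hx : x ∈ Set.Ico 0 b) : 0 ≤ D x := by
  by_contra! hneg
  obtain ⟨c, ⟨⟨hc0, hcx⟩, hDc⟩, hmax⟩ := ((isCompact_Icc (a := (0 : ℝ)) (b := x)).inter_right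
    (isClosed_le continuous_const hc)).exists_isGreatest ⟨0, ⟨le_rfl, hx.1⟩, h0⟩
  have hmono : MonotoneOn D (Set.Icc c x) := by
    have hIoo : ∀ y ∈ Set.Ioo c x, y ∈ Set.Ioo 0 b := fun y hy =>
      ⟨hc0.trans_lt hy.1, hy.2.trans hx.2⟩
    refine monotoneOn_of_hasDerivWithinAt_nonneg (f' := D') (convex_Icc c x) hc.continuousOn ?_ ?_
    · intro y hy
      rw [interior_Icc] at hy
      exact (hd y (hIoo y hy)).hasDerivWithinAt
    · intro y hy
      rw [interior_Icc] at hy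
      refine hD y (hIoo y hy) (not_le.1 fun hy0 => ?_)
      exact hy.1.not_ge (hmax ⟨⟨(hIoo y hy).1.le, hy.2.le⟩, hy0⟩)
  exact hneg.not_ge (le_trans hDc (hmono ⟨le_rfl, hcx⟩ ⟨hcx, le_rfl⟩ hcx))

/-- `t` is distributed under `μ` like a coordinate of a uniform random point of the unit sphere of
dimension `2 ν + 1`, as expressed by integration by parts. -/
structure IsUltraspherical {Ω : Type*} [TopologicalSpace Ω] [MeasurableSpace Ω]
    (μ : Measure Ω) (t : Ω → ℝ) (ν : ℝ) : Prop where
  continuous : Continuous t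
  abs_le : ∀ y, |t y| ≤ 1
  integral_mul : ∀ h h' : ℝ → ℝ, Continuous h' → (∀ x, HasDerivAt h (h' x) x) →
    (2 * ν + 1) * ∫ y, t y * h (t y) ∂μ = ∫ y, (1 - t y ^ 2) * h' (t y) ∂μ

/-- The moment `∫ |e + ρ y| ^ (2 k)`, where `t y` is the inner product of `e` and `y`. -/
noncomputable def moment {Ω : Type*} [MeasurableSpace Ω] (μ : Measure Ω) (t : Ω → ℝ)
    (k ρ : ℝ) : ℝ :=
  ∫ y, (1 + ρ ^ 2 + 2 * ρ * t y) ^ k ∂μ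

/-- One minus the logarithmic derivative, normalized by `k`, of the moment. -/
noncomputable def momentRatio {Ω : Type*} [MeasurableSpace Ω] (μ : Measure Ω) (t : Ω → ℝ)
    (k ρ : ℝ) : ℝ :=
  (1 - ρ ^ 2) * moment μ t (k - 1) ρ / moment μ t k ρ

theorem moment_zero_right {Ω : Type*} [MeasurableSpace Ω] (μ : Measure Ω) [IsProbabilityMeasure μ]
    (t : Ω → ℝ) (k : ℝ) : moment μ t k 0 = 1 := by
  simp [moment]

theorem momentRatio_zero_right {Ω : Type*} [MeasurableSpace Ω] (μ : Measure Ω)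
    [IsProbabilityMeasure μ] (t : Ω → ℝ) (k : ℝ) : momentRatio μ t k 0 = 1 := by
  simp [momentRatio, moment_zero_right]

theorem quadratic_nonneg {t : ℝ} (ht : |t| ≤ 1) (ρ : ℝ) : 0 ≤ 1 + ρ ^ 2 + 2 * ρ * t := by
  have : t ^ 2 ≤ 1 := (sq_le_one_iff_abs_le_one t).2 ht
  nlinarith [sq_nonneg (ρ + t)]

theorem quadratic_le_one_add_sq {t ρ : ℝ} (ht : |t| ≤ 1) (hρ : 0 ≤ ρ) :
    1 + ρ ^ 2 + 2 * ρ * t ≤ (1 + ρ) ^ 2 := by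
  nlinarith [mul_nonneg hρ (by linarith [(abs_le.1 ht).2] : 0 ≤ 1 - t)]

theorem rpow_eq_mul_rpow_sub_one {w k : ℝ} (hw : 0 ≤ w) (hk : 1 ≤ k) :
    w ^ k = w * w ^ (k - 1) := by
  have h := Real.rpow_add_one' hw (y := k - 1) (by linarith)
  rw [sub_add_cancel] at h
  rw [h, mul_comm]

namespace IsUltraspherical

section

variable {Ω : Type*} [TopologicalSpace Ω] [MeasurableSpace Ω] {μ : Measure Ω} {t : Ω → ℝ} {ν : ℝ}

theorem continuous_rpow (ht : IsUltraspherical μ t ν) {k : ℝ} (hk : 0 ≤ k) (ρ : ℝ) :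
    Continuous fun y => (1 + ρ ^ 2 + 2 * ρ * t y) ^ k :=
  (Real.continuous_rpow_const hk).comp (by have := ht.continuous; fun_prop)

theorem integral_eq_zero (ht : IsUltraspherical μ t ν) (hν : 0 ≤ ν) : ∫ y, t y ∂μ = 0 := by
  have h := ht.integral_mul (fun _ => 1) (fun _ => 0) continuous_const
    (fun x => hasDerivAt_const x 1)
  simp only [mul_one, mul_zero, integral_zero, mul_eq_zero] at h
  exact h.resolve_left (by positivity)

theorem integral_mul_rpow (ht : IsUltraspherical μ t ν) {k : ℝ} (hk : 2 < k) (ρ : ℝ) :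
    (2 * ν + 1) * ∫ y, t y * (1 + ρ ^ 2 + 2 * ρ * t y) ^ (k - 1) ∂μ =
      2 * ρ * (k - 1) * ∫ y, (1 - t y ^ 2) * (1 + ρ ^ 2 + 2 * ρ * t y) ^ (k - 2) ∂μ := by
  rw [ht.integral_mul (fun x => (1 + ρ ^ 2 + 2 * ρ * x) ^ (k - 1))
    (fun x => (2 * ρ) * (k - 1) * (1 + ρ ^ 2 + 2 * ρ * x) ^ (k - 2))
    (continuous_const.mul ((Real.continuous_rpow_const (by linarith)).comp (by fun_prop)))
    (fun x => by
      have h1 : HasDerivAt (fun x : ℝ => 1 + ρ ^ 2 + 2 * ρ * x) (2 * ρ) x := by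
        simpa using ((hasDerivAt_id x).const_mul (2 * ρ)).const_add (1 + ρ ^ 2)
      convert h1.rpow_const (p := k - 1) (Or.inr (by linarith)) using 3
      ring), ← integral_const_mul]
  exact integral_congr_ae (.of_forall fun y => by ring)

theorem moment_eq_rpow_mul_moment_inv (ht : IsUltraspherical μ t ν) (k : ℝ) {ρ : ℝ} (hρ : 0 < ρ) :
    moment μ t k ρ = (ρ ^ 2) ^ k * moment μ t k ρ⁻¹ := by
  rw [moment, moment, ← integral_const_mul]
  refine integral_congr_ae (.of_forall fun y => ?_)
  simp only
  rw [← Real.mul_rpow (sq_nonneg ρ) (quadratic_nonneg (ht.abs_le y) _)]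
  congr 1
  field_simp
  ring

end

end IsUltraspherical

section Ultraspherical

variable {Ω : Type*} [TopologicalSpace Ω] [CompactSpace Ω] [MeasurableSpace Ω] [BorelSpace Ω]
  {μ : Measure Ω} [IsProbabilityMeasure μ] {t : Ω → ℝ} {ν : ℝ}

theorem integrable_of_continuous {f : Ω → ℝ} (hf : Continuous f) : Integrable f μ :=
  hf.integrable_of_hasCompactSupport (HasCompactSupport.of_compactSpace _)

namespace IsUltraspherical

theorem one_le_moment (ht : IsUltraspherical μ t ν) (hν : 0 ≤ ν) {k : ℝ} (hk : 1 ≤ k) (ρ : ℝ) :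
    1 ≤ moment μ t k ρ := by
  have hc := ht.continuous
  have h1 : ∫ y, (1 + k * (ρ ^ 2 + 2 * ρ * t y)) ∂μ = 1 + k * ρ ^ 2 := by
    have : ∀ y, 1 + k * (ρ ^ 2 + 2 * ρ * t y) = (1 + k * ρ ^ 2) + (2 * k * ρ) * t y :=
      fun y => by ring
    simp only [this]
    rw [integral_add (integrable_const _) (integrable_of_continuous (by fun_prop)),
      integral_const_mul, ht.integral_eq_zero hν]
    simp
  have h2 : ∫ y, (1 + k * (ρ ^ 2 + 2 * ρ * t y)) ∂μ ≤ moment μ t k ρ := by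
    refine integral_mono (integrable_of_continuous (by fun_prop))
      (integrable_of_continuous (ht.continuous_rpow (by linarith) ρ)) fun y => ?_
    have := one_add_mul_self_le_rpow_one_add (s := ρ ^ 2 + 2 * ρ * t y)
      (by linarith [quadratic_nonneg (ht.abs_le y) ρ]) hk
    simpa [add_assoc] using this
  nlinarith [sq_nonneg ρ]

theorem moment_pos (ht : IsUltraspherical μ t ν) (hν : 0 ≤ ν) {k : ℝ} (hk : 1 ≤ k) (ρ : ℝ) :
    0 < moment μ t k ρ :=
  one_pos.trans_le (ht.one_le_moment hν hk ρ)

theorem moment_sub (ht : IsUltraspherical μ t ν) {k : ℝ} (hk : 1 ≤ k) (ρ : ℝ) :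
    moment μ t k ρ - (1 - ρ ^ 2) * moment μ t (k - 1) ρ =
      ρ * ∫ y, (1 + ρ ^ 2 + 2 * ρ * t y) ^ (k - 1) * (2 * ρ + 2 * t y) ∂μ := by
  have hc1 := ht.continuous_rpow (k := k) (by linarith) ρ
  have hc2 := ht.continuous_rpow (k := k - 1) (by linarith) ρ
  rw [moment, moment, ← integral_const_mul, ← integral_const_mul,
    ← integral_sub (integrable_of_continuous hc1) (integrable_of_continuous (by fun_prop))]
  refine integral_congr_ae (.of_forall fun y => ?_)
  simp only
  rw [rpow_eq_mul_rpow_sub_one (quadratic_nonneg (ht.abs_le y) ρ) hk]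
  ring

theorem hasDerivAt_moment (ht : IsUltraspherical μ t ν) {k : ℝ} (hk : 1 ≤ k) {ρ : ℝ}
    (hρ : ρ ≠ 0) :
    HasDerivAt (moment μ t k)
      (k * (moment μ t k ρ - (1 - ρ ^ 2) * moment μ t (k - 1) ρ) / ρ) ρ := by
  have hc := ht.continuous
  have h := hasDerivAt_integral_of_continuous (μ := μ)
    (F := fun ρ y => (1 + ρ ^ 2 + 2 * ρ * t y) ^ k)
    (F' := fun ρ y => k * ((1 + ρ ^ 2 + 2 * ρ * t y) ^ (k - 1) * (2 * ρ + 2 * t y)))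
    ((Real.continuous_rpow_const (by linarith)).comp (by fun_prop))
    (continuous_const.mul (((Real.continuous_rpow_const (by linarith)).comp
      (by fun_prop : Continuous fun z : ℝ × Ω => 1 + z.1 ^ 2 + 2 * z.1 * t z.2)).mul
        (by fun_prop)))
    (fun x y => by
      have h1 : HasDerivAt (fun x : ℝ => 1 + x ^ 2 + 2 * x * t y) (2 * x + 2 * t y) x := by
        have := (((hasDerivAt_id x).pow 2).const_add 1).add
          (((hasDerivAt_id x).const_mul 2).mul_const (t y))
        exact this.congr_deriv (by simp)
      convert h1.rpow_const (p := k) (Or.inr hk) using 1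
      ring) ρ
  rw [integral_const_mul] at h
  rw [ht.moment_sub hk]
  rwa [mul_left_comm, mul_div_cancel_left₀ _ hρ]

theorem continuous_moment (ht : IsUltraspherical μ t ν) {k : ℝ} (hk : 0 ≤ k) :
    Continuous (moment μ t k) := by
  have hc := ht.continuous
  have := continuous_parametric_integral_of_continuous (μ := μ) (s := Set.univ)
    (f := fun ρ y => (1 + ρ ^ 2 + 2 * ρ * t y) ^ k)
    ((Real.continuous_rpow_const hk).comp (by fun_prop)) isCompact_univ
  simp only [Measure.restrict_univ] at this
  exact this

theorem moment_recurrence (ht : IsUltraspherical μ t ν) {k : ℝ} (hk : 2 < k) (ρ : ℝ) :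
    (k + 2 * ν) * moment μ t k ρ =
      (2 * k + 2 * ν - 1) * (1 + ρ ^ 2) * moment μ t (k - 1) ρ -
        (k - 1) * (1 - ρ ^ 2) ^ 2 * moment μ t (k - 2) ρ := by
  have hi0 := integrable_of_continuous (μ := μ) (ht.continuous_rpow (k := k) (by linarith) ρ)
  have hi1 := integrable_of_continuous (μ := μ) (ht.continuous_rpow (k := k - 1) (by linarith) ρ)
  have hi2 := integrable_of_continuous (μ := μ) (ht.continuous_rpow (k := k - 2) (by linarith) ρ)
  have h1 : 2 * ρ * ∫ y, t y * (1 + ρ ^ 2 + 2 * ρ * t y) ^ (k - 1) ∂μ =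
      moment μ t k ρ - (1 + ρ ^ 2) * moment μ t (k - 1) ρ := by
    rw [moment, moment, ← integral_const_mul, ← integral_const_mul,
      ← integral_sub hi0 (hi1.const_mul _)]
    refine integral_congr_ae (.of_forall fun y => ?_)
    simp only
    rw [rpow_eq_mul_rpow_sub_one (k := k) (quadratic_nonneg (ht.abs_le y) ρ) (by linarith)]
    ring
  have h2 : 4 * ρ ^ 2 * ∫ y, (1 - t y ^ 2) * (1 + ρ ^ 2 + 2 * ρ * t y) ^ (k - 2) ∂μ =
      (2 * (1 + ρ ^ 2)) * moment μ t (k - 1) ρ -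
        (moment μ t k ρ + (1 - ρ ^ 2) ^ 2 * moment μ t (k - 2) ρ) := by
    rw [moment, moment, moment, ← integral_const_mul, ← integral_const_mul, ← integral_const_mul,
      ← integral_add hi0 (hi2.const_mul _)]
    rw [← integral_sub (hi1.const_mul _)]
    · refine integral_congr_ae (.of_forall fun y => ?_)
      simp only
      have hw := quadratic_nonneg (ht.abs_le y) ρ
      have h3 := rpow_eq_mul_rpow_sub_one (k := k - 1) hw (by linarith)
      rw [show k - 1 - 1 = k - 2 by ring] at h3
      rw [rpow_eq_mul_rpow_sub_one (k := k) hw (by linarith), h3]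
      ring
    · exact hi0.add (hi2.const_mul _)
  linear_combination 2 * ρ * ht.integral_mul_rpow hk ρ - (2 * ν + 1) * h1 + (k - 1) * h2

theorem one_sub_sq_mul_moment_le (ht : IsUltraspherical μ t ν) (hν : 0 ≤ ν) {k : ℝ} (hk : 2 < k)
    {ρ : ℝ} (hρ : 0 ≤ ρ) : (1 - ρ ^ 2) * moment μ t (k - 1) ρ ≤ moment μ t k ρ := by
  have hc := ht.continuous
  have hc1 := ht.continuous_rpow (k := k - 1) (by linarith) ρ
  have h1 : 0 ≤ ∫ y, t y * (1 + ρ ^ 2 + 2 * ρ * t y) ^ (k - 1) ∂μ := by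
    refine nonneg_of_mul_nonneg_right (a := 2 * ν + 1) ?_ (by positivity)
    rw [ht.integral_mul_rpow hk]
    refine mul_nonneg (mul_nonneg (by positivity) (by linarith)) (integral_nonneg fun y => ?_)
    exact mul_nonneg (sub_nonneg.2 ((sq_le_one_iff_abs_le_one _).2 (ht.abs_le y)))
      (Real.rpow_nonneg (quadratic_nonneg (ht.abs_le y) ρ) _)
  have h2 : ∫ y, (1 + ρ ^ 2 + 2 * ρ * t y) ^ (k - 1) * (2 * ρ + 2 * t y) ∂μ =
      2 * ρ * moment μ t (k - 1) ρ + 2 * ∫ y, t y * (1 + ρ ^ 2 + 2 * ρ * t y) ^ (k - 1) ∂μ := by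
    rw [moment, ← integral_const_mul, ← integral_const_mul,
      ← integral_add (integrable_of_continuous (by fun_prop))
        (integrable_of_continuous (by fun_prop))]
    exact integral_congr_ae (.of_forall fun y => by ring)
  have h3 := ht.moment_pos hν (k := k - 1) (by linarith) ρ
  rw [← sub_nonneg, ht.moment_sub (by linarith), h2]
  positivity

theorem moment_le (ht : IsUltraspherical μ t ν) {k : ℝ} (hk : 1 ≤ k) {ρ : ℝ} (hρ : 0 ≤ ρ) :
    moment μ t k ρ ≤ (1 + ρ) ^ 2 * moment μ t (k - 1) ρ := by
  have hc0 := ht.continuous_rpow (k := k) (by linarith) ρ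
  have hc1 := ht.continuous_rpow (k := k - 1) (by linarith) ρ
  rw [moment, moment, ← integral_const_mul]
  refine integral_mono (integrable_of_continuous hc0)
    ((integrable_of_continuous hc1).const_mul _) fun y => ?_
  have hw := quadratic_nonneg (ht.abs_le y) ρ
  simp only
  rw [rpow_eq_mul_rpow_sub_one hw hk]
  exact mul_le_mul_of_nonneg_right (quadratic_le_one_add_sq (ht.abs_le y) hρ)
    (Real.rpow_nonneg hw _)

theorem momentRatio_nonneg (ht : IsUltraspherical μ t ν) (hν : 0 ≤ ν) {k : ℝ} (hk : 2 < k) {ρ : ℝ}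
    (hρ : 0 ≤ ρ) (hρ1 : ρ ≤ 1) : 0 ≤ momentRatio μ t k ρ :=
  div_nonneg (mul_nonneg (by nlinarith) (ht.moment_pos hν (by linarith) ρ).le)
    (ht.moment_pos hν (by linarith) ρ).le

theorem momentRatio_le_one (ht : IsUltraspherical μ t ν) (hν : 0 ≤ ν) {k : ℝ} (hk : 2 < k) {ρ : ℝ}
    (hρ : 0 ≤ ρ) : momentRatio μ t k ρ ≤ 1 :=
  (div_le_one (ht.moment_pos hν (by linarith) ρ)).2 (ht.one_sub_sq_mul_moment_le hν hk hρ)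

theorem one_sub_le_mul_momentRatio (ht : IsUltraspherical μ t ν) (hν : 0 ≤ ν) {k : ℝ} (hk : 2 < k)
    {ρ : ℝ} (hρ : 0 ≤ ρ) (hρ1 : ρ ≤ 1) : 1 - ρ ≤ (1 + ρ) * momentRatio μ t k ρ := by
  rw [momentRatio, ← mul_div_assoc, le_div_iff₀ (ht.moment_pos hν (by linarith) ρ)]
  have := mul_le_mul_of_nonneg_left (ht.moment_le (k := k) (by linarith) hρ)
    (sub_nonneg.2 hρ1)
  linarith

theorem momentRatio_inv (ht : IsUltraspherical μ t ν) (hν : 0 ≤ ν) {k : ℝ} (hk : 2 < k) {ρ : ℝ}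
    (hρ : 0 < ρ) : momentRatio μ t k ρ⁻¹ = -momentRatio μ t k ρ := by
  have h0 := ht.moment_pos hν (k := k) (by linarith) ρ⁻¹
  have h1 : (ρ ^ 2) ^ k = ρ ^ 2 * (ρ ^ 2) ^ (k - 1) :=
    rpow_eq_mul_rpow_sub_one (sq_nonneg ρ) (by linarith)
  have h2 : 0 < (ρ ^ 2) ^ (k - 1) := by positivity
  rw [momentRatio, momentRatio, ht.moment_eq_rpow_mul_moment_inv k hρ,
    ht.moment_eq_rpow_mul_moment_inv (k - 1) hρ, h1]
  field_simp
  ring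

theorem continuous_momentRatio (ht : IsUltraspherical μ t ν) (hν : 0 ≤ ν) {k : ℝ} (hk : 2 < k) :
    Continuous (momentRatio μ t k) :=
  ((by fun_prop : Continuous fun ρ : ℝ => 1 - ρ ^ 2).mul
    (ht.continuous_moment (by linarith))).div (ht.continuous_moment (by linarith))
    fun ρ => (ht.moment_pos hν (by linarith) ρ).ne'

theorem hasDerivAt_log_moment (ht : IsUltraspherical μ t ν) (hν : 0 ≤ ν) {k : ℝ} (hk : 2 < k)
    {ρ : ℝ} (hρ : ρ ≠ 0) :
    HasDerivAt (fun ρ => Real.log (moment μ t k ρ)) (k * (1 - momentRatio μ t k ρ) / ρ) ρ := by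
  have h0 := ht.moment_pos hν (k := k) (by linarith) ρ
  convert (ht.hasDerivAt_moment (k := k) (by linarith) hρ).log h0.ne' using 1
  rw [momentRatio]
  field_simp

/-- The Riccati equation coming from the hypergeometric equation for the moments. -/
theorem hasDerivAt_momentRatio (ht : IsUltraspherical μ t ν) (hν : 0 ≤ ν) {k : ℝ} (hk : 2 < k)
    {ρ : ℝ} (hρ : 0 < ρ) (hρ1 : ρ < 1) :
    HasDerivAt (momentRatio μ t k)
      ((k * (1 - momentRatio μ t k ρ) ^ 2 + 2 * ν * (1 - momentRatio μ t k ρ) -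
        4 * (k + ν) * ρ ^ 2 * (momentRatio μ t k ρ / (1 - ρ ^ 2))) / ρ) ρ := by
  have h0 := ht.moment_pos hν (k := k) (by linarith) ρ
  have hz : 0 < 1 - ρ ^ 2 := by nlinarith
  have hA := ht.hasDerivAt_moment (k := k) (by linarith) hρ.ne'
  have hB := ht.hasDerivAt_moment (k := k - 1) (by linarith) hρ.ne'
  have hrec := ht.moment_recurrence hk ρ
  have hsq : HasDerivAt (fun ρ : ℝ => 1 - ρ ^ 2) (-(2 * ρ)) ρ := by
    simpa using (hasDerivAt_pow 2 ρ).const_sub 1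
  refine ((hsq.mul hB).div hA h0.ne').congr_deriv ?_
  rw [show k - 1 - 1 = k - 2 by ring]
  simp only [momentRatio, Pi.mul_apply]
  generalize moment μ t k ρ = A at *
  generalize moment μ t (k - 1) ρ = B at *
  generalize moment μ t (k - 2) ρ = C at *
  field_simp
  linear_combination -A * hrec

theorem momentRatio_nonpos (ht : IsUltraspherical μ t ν) (hν : 0 ≤ ν) {k : ℝ} (hk : 2 < k) {ρ : ℝ}
    (hρ1 : 1 ≤ ρ) : momentRatio μ t k ρ ≤ 0 :=
  div_nonpos_of_nonpos_of_nonneg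
    (mul_nonpos_of_nonpos_of_nonneg (by nlinarith) (ht.moment_pos hν (by linarith) ρ).le)
    (ht.moment_pos hν (by linarith) ρ).le

theorem hasDerivAt_momentRatio_mul (ht : IsUltraspherical μ t ν) (hν : 0 ≤ ν) {k : ℝ} (hk : 2 < k)
    {c s : ℝ} (hc : 0 < c) (hs : 0 < s) (hcs : c * s < 1) :
    HasDerivAt (fun s => momentRatio μ t k (c * s))
      ((k * (1 - momentRatio μ t k (c * s)) ^ 2 + 2 * ν * (1 - momentRatio μ t k (c * s)) -
        4 * (k + ν) * (c * s) ^ 2 * (momentRatio μ t k (c * s) / (1 - (c * s) ^ 2))) / s) s := by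
  have h := (ht.hasDerivAt_momentRatio hν hk (mul_pos hc hs) hcs).comp s
    ((hasDerivAt_id s).const_mul c)
  refine h.congr_deriv ?_
  generalize _ - 4 * (k + ν) * (c * s) ^ 2 * _ = R
  field_simp

theorem momentRatio_inv_mul_le_of_lt (ht : IsUltraspherical μ t ν) (hν : 0 ≤ ν) {k l α β s : ℝ}
    (hk : 2 < k) (hkl : k ≤ l) (hα : 0 < α) (hαk : α ^ 2 = k + ν) (hβ : 0 < β)
    (hβl : β ^ 2 = l + ν) (hs : 0 ≤ s) (hsα : s < α) :
    momentRatio μ t k (α⁻¹ * s) ≤ momentRatio μ t l (β⁻¹ * s) := by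
  have hl : 2 < l := hk.trans_le hkl
  have hαβ : α ≤ β := by nlinarith
  have hlt : ∀ {γ x : ℝ}, 0 < γ → x < γ → γ⁻¹ * x < 1 := fun hγ hx => by
    rwa [inv_mul_lt_iff₀ hγ, mul_one]
  have hck := ht.continuous_momentRatio hν hk
  have hcl := ht.continuous_momentRatio hν hl
  have key := nonneg_of_deriv_nonneg_of_neg (b := α)
    (D := fun s => momentRatio μ t l (β⁻¹ * s) - momentRatio μ t k (α⁻¹ * s))
    (by fun_prop) (by simp [momentRatio_zero_right])
    (fun x hx => (ht.hasDerivAt_momentRatio_mul hν hl (inv_pos.2 hβ) hx.1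
      (hlt hβ (hx.2.trans_le hαβ))).sub
      (ht.hasDerivAt_momentRatio_mul hν hk (inv_pos.2 hα) hx.1 (hlt hα hx.2)))
    (fun x ⟨hx0, hxα⟩ hneg => ?_) ⟨hs, hsα⟩
  · exact sub_nonneg.1 key
  have hxβ : x < β := hxα.trans_le hαβ
  have hzk : (k + ν) * (α⁻¹ * x) ^ 2 = x ^ 2 := by rw [← hαk]; field_simp
  have hzl : (l + ν) * (β⁻¹ * x) ^ 2 = x ^ 2 := by rw [← hβl]; field_simp
  have hk1 := ht.momentRatio_le_one hν hk (ρ := α⁻¹ * x) (by positivity)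
  have hl0 := ht.momentRatio_nonneg hν hl (ρ := β⁻¹ * x) (by positivity) (hlt hβ hxβ).le
  have hzα : 0 < 1 - (α⁻¹ * x) ^ 2 := by
    have := hlt hα hxα
    have : 0 < α⁻¹ * x := by positivity
    nlinarith
  have hzle : 1 - (α⁻¹ * x) ^ 2 ≤ 1 - (β⁻¹ * x) ^ 2 := by gcongr
  rw [mul_assoc 4 (k + ν), mul_assoc 4 (l + ν), hzk, hzl, ← sub_div]
  refine div_nonneg ?_ hx0.le
  replace hneg := (sub_neg.1 hneg).le
  have hdiv : momentRatio μ t l (β⁻¹ * x) / (1 - (β⁻¹ * x) ^ 2) ≤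
      momentRatio μ t k (α⁻¹ * x) / (1 - (α⁻¹ * x) ^ 2) :=
    div_le_div₀ (hl0.trans hneg) hneg hzα hzle
  generalize momentRatio μ t l (β⁻¹ * x) / (1 - (β⁻¹ * x) ^ 2) = q at *
  generalize momentRatio μ t k (α⁻¹ * x) / (1 - (α⁻¹ * x) ^ 2) = q' at *
  generalize momentRatio μ t l (β⁻¹ * x) = Q at *
  generalize momentRatio μ t k (α⁻¹ * x) = Q' at *
  have h1 : k * (1 - Q') ^ 2 ≤ l * (1 - Q) ^ 2 := by gcongr
  have h2 : 2 * ν * (1 - Q') ≤ 2 * ν * (1 - Q) := by gcongr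
  have h3 : 4 * x ^ 2 * q ≤ 4 * x ^ 2 * q' := by gcongr
  linarith

theorem momentRatio_mul_le_of_lt (ht : IsUltraspherical μ t ν) (hν : 0 ≤ ν) {k l α β s : ℝ}
    (hk : 2 < k) (hkl : k ≤ l) (hα : 0 < α) (hαk : α ^ 2 = k + ν) (hβ : 0 < β)
    (hβl : β ^ 2 = l + ν) (hs : 0 ≤ s) (hsβ : s < β⁻¹) :
    momentRatio μ t l (β * s) ≤ momentRatio μ t k (α * s) := by
  have hl : 2 < l := hk.trans_le hkl
  have hαβ : α ≤ β := by nlinarith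
  have hltβ : ∀ {x : ℝ}, x < β⁻¹ → β * x < 1 := fun hx => by
    rwa [← lt_inv_mul_iff₀ hβ, mul_one]
  have hltα : ∀ {x : ℝ}, 0 < x → x < β⁻¹ → α * x < 1 := fun hx0 hx =>
    (mul_le_mul_of_nonneg_right hαβ hx0.le).trans_lt (hltβ hx)
  have hck := ht.continuous_momentRatio hν hk
  have hcl := ht.continuous_momentRatio hν hl
  have key := nonneg_of_deriv_nonneg_of_neg (b := β⁻¹)
    (D := fun s => momentRatio μ t k (α * s) - momentRatio μ t l (β * s))
    (by fun_prop) (by simp [momentRatio_zero_right])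
    (fun x hx => (ht.hasDerivAt_momentRatio_mul hν hk hα hx.1 (hltα hx.1 hx.2)).sub
      (ht.hasDerivAt_momentRatio_mul hν hl hβ hx.1 (hltβ hx.2)))
    (fun x ⟨hx0, hxβ⟩ hneg => ?_) ⟨hs, hsβ⟩
  · exact sub_nonneg.1 key
  have hl1 := ht.momentRatio_le_one hν hl (ρ := β * x) (by positivity)
  have hk0 := ht.momentRatio_nonneg hν hk (ρ := α * x) (by positivity) (hltα hx0 hxβ).le
  have hklow := ht.one_sub_le_mul_momentRatio hν hk (ρ := α * x) (by positivity)
    (hltα hx0 hxβ).le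
  rw [← sub_div]
  refine div_nonneg ?_ hx0.le
  replace hneg := (sub_neg.1 hneg).le
  have hle : α * x ≤ β * x := by gcongr
  have hα1 := hltα hx0 hxβ
  have hβ1 := hltβ hxβ
  have hα0 : 0 < α * x := by positivity
  generalize momentRatio μ t l (β * x) = Q at *
  generalize momentRatio μ t k (α * x) = Q' at *
  generalize α * x = a at *
  generalize β * x = b at *
  have hza : 0 < 1 - a ^ 2 := by nlinarith
  have hzb : 0 < 1 - b ^ 2 := by nlinarith
  have hdiv : a ^ 2 * (Q' / (1 - a ^ 2)) ≤ b ^ 2 * (Q / (1 - b ^ 2)) := by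
    have := hk0.trans hneg
    gcongr
  have hlow : (1 - Q') ^ 2 ≤ 4 * (a ^ 2 * (Q' / (1 - a ^ 2))) := by
    have h1 : (1 + a) * (1 - Q') ≤ 2 * a := by linarith
    have h2 : ((1 + a) * (1 - Q')) ^ 2 ≤ (2 * a) ^ 2 :=
      pow_le_pow_left₀ (mul_nonneg (by linarith) (by linarith)) h1 2
    have h3 : 1 / (1 + a) ^ 2 ≤ Q' / (1 - a ^ 2) := by
      rw [div_le_div_iff₀ (by positivity) hza]
      nlinarith
    calc (1 - Q') ^ 2 = ((1 + a) * (1 - Q')) ^ 2 / (1 + a) ^ 2 := by field_simp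
      _ ≤ (2 * a) ^ 2 / (1 + a) ^ 2 := by gcongr
      _ = 4 * (a ^ 2 * (1 / (1 + a) ^ 2)) := by ring
      _ ≤ _ := by gcongr
  have h1 : l * (1 - Q) ^ 2 ≤ l * (1 - Q') ^ 2 := by gcongr
  have h2 : 2 * ν * (1 - Q) ≤ 2 * ν * (1 - Q') := by gcongr
  have h3 := mul_le_mul_of_nonneg_left hdiv (by linarith : 0 ≤ l + ν)
  have h4 := mul_le_mul_of_nonneg_left hlow (sub_nonneg.2 hkl)
  linarith

theorem momentRatio_inv_mul_le (ht : IsUltraspherical μ t ν) (hν : 0 ≤ ν) {k l α β s : ℝ}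
    (hk : 2 < k) (hkl : k ≤ l) (hα : 0 < α) (hαk : α ^ 2 = k + ν) (hβ : 0 < β)
    (hβl : β ^ 2 = l + ν) (hs : 0 < s) :
    momentRatio μ t k (α⁻¹ * s) ≤ momentRatio μ t l (β⁻¹ * s) := by
  have hl : 2 < l := hk.trans_le hkl
  rcases lt_or_ge s α with hsα | hsα
  · exact ht.momentRatio_inv_mul_le_of_lt hν hk hkl hα hαk hβ hβl hs.le hsα
  rcases le_or_gt s β with hsβ | hsβ
  · refine (ht.momentRatio_nonpos hν hk ?_).trans
      (ht.momentRatio_nonneg hν hl (by positivity) ?_)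
    · rwa [le_inv_mul_iff₀ hα, mul_one]
    · rwa [inv_mul_le_iff₀ hβ, mul_one]
  · have h := ht.momentRatio_mul_le_of_lt hν hk hkl hα hαk hβ hβl (inv_pos.2 hs).le
      (inv_strictAnti₀ hβ hsβ)
    rw [← inv_inv (α⁻¹ * s), ← inv_inv (β⁻¹ * s), ht.momentRatio_inv hν hk (by positivity),
      ht.momentRatio_inv hν hl (by positivity)]
    simpa only [mul_inv, inv_inv, neg_le_neg_iff] using h

/-- Hypercontractivity for the moments. -/
theorem moment_rpow_le (ht : IsUltraspherical μ t ν) (hν : 0 ≤ ν) {k l ρ : ℝ}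
    (hk : 2 < k) (hkl : k ≤ l) (hρ : 0 ≤ ρ) :
    moment μ t l (ρ * √((k + ν) / (l + ν))) ^ (1 / l) ≤ moment μ t k ρ ^ (1 / k) := by
  have hl : 2 < l := hk.trans_le hkl
  have hα : 0 < √(k + ν) := Real.sqrt_pos.2 (by linarith)
  have hβ : 0 < √(l + ν) := Real.sqrt_pos.2 (by linarith)
  have hαk : √(k + ν) ^ 2 = k + ν := Real.sq_sqrt (by linarith)
  have hβl : √(l + ν) ^ 2 = l + ν := Real.sq_sqrt (by linarith)
  rw [Real.sqrt_div (by linarith)]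
  generalize √(k + ν) = α at *
  generalize √(l + ν) = β at *
  have hlog : ∀ {k γ : ℝ}, 2 < k → 0 < γ → ∀ s ∈ Set.Ioi (0 : ℝ),
      HasDerivAt (fun s => Real.log (moment μ t k (γ⁻¹ * s)) / k)
        ((1 - momentRatio μ t k (γ⁻¹ * s)) / s) s := fun {k γ} hk hγ s hs => by
    have hs : 0 < s := hs
    refine (((ht.hasDerivAt_log_moment hν hk (ρ := γ⁻¹ * s) (by positivity)).comp s
      ((hasDerivAt_id s).const_mul γ⁻¹)).div_const k).congr_deriv ?_
    field_simp
  have hcont : ∀ {k γ : ℝ}, 2 < k →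
      Continuous fun s => Real.log (moment μ t k (γ⁻¹ * s)) / k := fun {k γ} hk =>
    (((ht.continuous_moment (by linarith)).comp (continuous_const_mul γ⁻¹)).log
      fun s => (ht.moment_pos hν (by linarith) _).ne').div_const k
  have hmono : MonotoneOn (fun s => Real.log (moment μ t k (α⁻¹ * s)) / k -
      Real.log (moment μ t l (β⁻¹ * s)) / l) (Set.Ici 0) := by
    refine monotoneOn_of_hasDerivWithinAt_nonneg (convex_Ici 0)
      ((hcont hk).sub (hcont hl)).continuousOn
      (f' := fun s => (1 - momentRatio μ t k (α⁻¹ * s)) / s -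
        (1 - momentRatio μ t l (β⁻¹ * s)) / s) ?_ ?_ <;> rw [interior_Ici]
    · exact fun s hs => ((hlog hk hα s hs).sub (hlog hl hβ s hs)).hasDerivWithinAt
    · intro s hs
      rw [← sub_div]
      refine div_nonneg ?_ (le_of_lt hs)
      linarith [ht.momentRatio_inv_mul_le hν hk hkl hα hαk hβ hβl hs]
  have h := hmono (Set.mem_Ici.2 le_rfl) (Set.mem_Ici.2 (by positivity : 0 ≤ α * ρ))
    (by positivity)
  simp only [mul_zero, moment_zero_right, Real.log_one, zero_div, sub_zero, sub_nonneg,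
    inv_mul_cancel_left₀ hα.ne'] at h
  rw [show ρ * (α / β) = β⁻¹ * (α * ρ) by ring,
    Real.rpow_def_of_pos (ht.moment_pos hν (by linarith) _),
    Real.rpow_def_of_pos (ht.moment_pos hν (by linarith) _), Real.exp_le_exp, mul_one_div,
    mul_one_div]
  exact h

/-- Moments are nondecreasing in the radius. -/
theorem monotoneOn_moment (ht : IsUltraspherical μ t ν) (hν : 0 ≤ ν) {k : ℝ} (hk : 2 < k) :
    MonotoneOn (moment μ t k) (Set.Ici 0) := by
  refine monotoneOn_of_hasDerivWithinAt_nonneg (convex_Ici 0)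
    (ht.continuous_moment (by linarith)).continuousOn
    (f' := fun ρ => k * (moment μ t k ρ - (1 - ρ ^ 2) * moment μ t (k - 1) ρ) / ρ) ?_ ?_ <;>
    rw [interior_Ici]
  · exact fun ρ hρ => (ht.hasDerivAt_moment (by linarith) (ne_of_gt hρ)).hasDerivWithinAt
  · exact fun ρ hρ => div_nonneg (mul_nonneg (by linarith)
      (sub_nonneg.2 (ht.one_sub_sq_mul_moment_le hν hk (le_of_lt hρ)))) (le_of_lt hρ)

end IsUltraspherical

end Ultraspherical

section Sphere

variable {n : ℕ}

instance isProbabilityMeasure_sphereHaar_s13 [NeZero n] : IsProbabilityMeasure (sphereHaar n) := by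
  refine ⟨?_⟩
  rw [sphereHaar, Measure.smul_apply, smul_eq_mul]
  refine ENNReal.inv_mul_cancel ?_ (measure_ne_top _ _)
  rw [Ne, Measure.measure_univ_eq_zero]
  exact Measure.toSphere_ne_zero _

open scoped Pointwise in
theorem LinearIsometryEquiv.measurePreserving_sphereHaar
    (R : EuclideanSpace ℝ (Fin n) ≃ₗᵢ[ℝ] EuclideanSpace ℝ (Fin n))
    {g : sphere (0 : EuclideanSpace ℝ (Fin n)) 1 → sphere (0 : EuclideanSpace ℝ (Fin n)) 1}
    (hg : ∀ y, (g y : EuclideanSpace ℝ (Fin n)) = R y) :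
    MeasurePreserving g (sphereHaar n) (sphereHaar n) := by
  have hgm : Measurable g := by
    refine Continuous.measurable (continuous_induced_rng.2 ?_)
    have : Subtype.val ∘ g = fun y => R y.val := funext hg
    rw [this]
    exact R.continuous.comp continuous_subtype_val
  refine MeasurePreserving.smul_measure ⟨hgm, Measure.ext fun s hs => ?_⟩ _
  rw [Measure.map_apply hgm hs, Measure.toSphere_apply' _ hs, Measure.toSphere_apply' _ (hgm hs),
    ← R.measurePreserving.measure_preimage_emb R.toHomeomorph.measurableEmbedding
      (Set.Ioo (0 : ℝ) 1 • (Subtype.val '' s))]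
  congr 2
  ext x
  simp only [Set.mem_smul, Set.mem_image, Set.mem_preimage]
  constructor
  · rintro ⟨c, hc, _, ⟨y, hy, rfl⟩, rfl⟩
    exact ⟨c, hc, R y, ⟨g y, hy, hg y⟩, by simp⟩
  · rintro ⟨c, hc, _, ⟨z, hz, rfl⟩, hx⟩
    have hz1 : R.symm (z : EuclideanSpace ℝ (Fin n)) ∈ sphere (0 : EuclideanSpace ℝ (Fin n)) 1 := by
      simp
    refine ⟨c, hc, _, ⟨⟨_, hz1⟩, ?_, rfl⟩, ?_⟩
    · have : g ⟨_, hz1⟩ = z := Subtype.ext (by rw [hg]; simp)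
      rwa [this]
    · apply R.injective
      simp [← hx]

theorem integral_sphereHaar_comp_linearIsometryEquiv
    (R : EuclideanSpace ℝ (Fin n) ≃ₗᵢ[ℝ] EuclideanSpace ℝ (Fin n))
    {F : EuclideanSpace ℝ (Fin n) → ℝ} (hF : Continuous F) :
    ∫ y, F (R (y : EuclideanSpace ℝ (Fin n))) ∂(sphereHaar n) = ∫ y, F y ∂(sphereHaar n) := by
  have hg := R.measurePreserving_sphereHaar (n := n)
    (g := fun y => ⟨R y, by simp [norm_eq_of_mem_sphere y]⟩) (fun y => rfl)
  have h := integral_map (μ := sphereHaar n) hg.measurable.aemeasurable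
    (hF.comp continuous_subtype_val).aestronglyMeasurable
  rw [hg.map_eq] at h
  exact h.symm

theorem integral_inner_mul_eq_integral_sq_mul [NeZero n] {e f : EuclideanSpace ℝ (Fin n)}
    (he : ‖e‖ = 1) (hf : ‖f‖ = 1) (hef : inner ℝ e f = 0) {h h' : ℝ → ℝ} (hh' : Continuous h')
    (hh : ∀ x, HasDerivAt h (h' x) x) :
    ∫ y, inner ℝ e (y : EuclideanSpace ℝ (Fin n)) * h (inner ℝ e y) ∂(sphereHaar n) =
      ∫ y, inner ℝ f (y : EuclideanSpace ℝ (Fin n)) ^ 2 * h' (inner ℝ e y) ∂(sphereHaar n) := by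
  have hhc : Continuous h := continuous_iff_continuousAt.2 fun x => (hh x).continuousAt
  let E := EuclideanSpace ℝ (Fin n)
  let F : ℝ → sphere (0 : E) 1 → ℝ := fun φ y =>
    (Real.sin φ * inner ℝ e (y : E) - Real.cos φ * inner ℝ f (y : E)) *
      h (Real.cos φ * inner ℝ e (y : E) + Real.sin φ * inner ℝ f (y : E))
  let F' : ℝ → sphere (0 : E) 1 → ℝ := fun φ y =>
    (Real.cos φ * inner ℝ e (y : E) + Real.sin φ * inner ℝ f (y : E)) *
        h (Real.cos φ * inner ℝ e (y : E) + Real.sin φ * inner ℝ f (y : E)) -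
      (Real.sin φ * inner ℝ e (y : E) - Real.cos φ * inner ℝ f (y : E)) ^ 2 *
        h' (Real.cos φ * inner ℝ e (y : E) + Real.sin φ * inner ℝ f (y : E))
  have hFF' : ∀ φ y, HasDerivAt (fun φ => F φ y) (F' φ y) φ := fun φ y => by
    have h1 : HasDerivAt
        (fun φ => Real.sin φ * inner ℝ e (y : E) - Real.cos φ * inner ℝ f (y : E)) _ φ :=
      ((Real.hasDerivAt_sin φ).mul_const _).sub ((Real.hasDerivAt_cos φ).mul_const _)
    have h2 : HasDerivAt
        (fun φ => Real.cos φ * inner ℝ e (y : E) + Real.sin φ * inner ℝ f (y : E)) _ φ :=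
      ((Real.hasDerivAt_cos φ).mul_const _).add ((Real.hasDerivAt_sin φ).mul_const _)
    refine (h1.mul ((hh _).comp φ h2)).congr_deriv ?_
    simp only [F', Function.comp]
    ring
  have hconst : ∀ φ, ∫ y, F φ y ∂(sphereHaar n) =
      ∫ y, inner ℝ f (y : E) * h (inner ℝ e (y : E)) ∂(sphereHaar n) := fun φ => by
    have hu : ‖Real.sin (φ / 2) • e - Real.cos (φ / 2) • f‖ ^ 2 = 1 := by
      rw [norm_sub_sq_real, norm_smul, norm_smul, he, hf, inner_smul_left, inner_smul_right, hef]
      simp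
    have hu1 := (pow_eq_one_iff_of_nonneg (norm_nonneg _) two_ne_zero).1 hu
    have hR : ∀ w y : E, inner ℝ w
        ((ℝ ∙ (Real.sin (φ / 2) • e - Real.cos (φ / 2) • f))ᗮ.reflection y) =
        inner ℝ w y - 2 * (Real.sin (φ / 2) * inner ℝ e y - Real.cos (φ / 2) * inner ℝ f y) *
          (Real.sin (φ / 2) * inner ℝ e w - Real.cos (φ / 2) * inner ℝ f w) := fun w y => by
      rw [Submodule.reflection_orthogonal_apply, Submodule.reflection_singleton_apply, hu1,
        two_nsmul]
      simp [inner_add_right, inner_sub_right, inner_smul_right, inner_sub_left, inner_smul_left,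
        real_inner_comm w]
      ring
    have h0 := integral_sphereHaar_comp_linearIsometryEquiv
      (ℝ ∙ (Real.sin (φ / 2) • e - Real.cos (φ / 2) • f))ᗮ.reflection
      (F := fun y => inner ℝ f y * h (inner ℝ e y)) (by fun_prop)
    rw [← h0]
    refine integral_congr_ae (.of_forall fun y => ?_)
    have hfe : inner ℝ f e = 0 := by rw [real_inner_comm, hef]
    have hs : Real.sin φ = 2 * Real.sin (φ / 2) * Real.cos (φ / 2) := by
      rw [← Real.sin_two_mul]; ring_nf
    have hc : Real.cos φ = 2 * Real.cos (φ / 2) ^ 2 - 1 := by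
      rw [← Real.cos_two_mul]; ring_nf
    have hc' := Real.sin_sq_add_cos_sq (φ / 2)
    simp only [F, hR, hef, hfe, real_inner_self_eq_norm_sq, he, hf]
    rw [hs, hc]
    congr 1
    · ring
    · congr 1
      linear_combination (2 * inner ℝ e (y : E)) * hc'
  have hd := hasDerivAt_integral_of_continuous (μ := sphereHaar n) (F := F) (F' := F')
    (by fun_prop) (by fun_prop) hFF' 0
  simp only [hconst] at hd
  have h0 := hd.unique (hasDerivAt_const _ _)
  simp only [F', Real.cos_zero, Real.sin_zero, one_mul, zero_mul, add_zero, zero_sub, neg_sq] at h0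
  rw [integral_sub (integrable_of_continuous (by fun_prop))
    (integrable_of_continuous (by fun_prop))] at h0
  exact sub_eq_zero.1 h0

theorem isUltraspherical_inner [NeZero n] {e : EuclideanSpace ℝ (Fin n)} (he : ‖e‖ = 1) :
    IsUltraspherical (sphereHaar n)
      (fun y : sphere (0 : EuclideanSpace ℝ (Fin n)) 1 => inner ℝ e (y : EuclideanSpace ℝ (Fin n)))
      (n / 2 - 1) where
  continuous := by fun_prop
  abs_le y := by
    have := abs_real_inner_le_norm e (y : EuclideanSpace ℝ (Fin n))
    rwa [he, norm_eq_of_mem_sphere, one_mul] at this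
  integral_mul h h' hh' hh := by
    have hhc : Continuous h := continuous_iff_continuousAt.2 fun x => (hh x).continuousAt
    obtain ⟨b, hb⟩ := Orthonormal.exists_orthonormalBasis_extension_of_card_eq (𝕜 := ℝ)
      (E := EuclideanSpace ℝ (Fin n)) (ι := Fin n) (by simp) (v := fun _ => e) (s := {0})
      ⟨by simp [he], fun i j hij => (hij (Subsingleton.elim i j)).elim⟩
    have hb0 : b 0 = e := hb 0 rfl
    have hsum : ∀ y : sphere (0 : EuclideanSpace ℝ (Fin n)) 1,
        1 - inner ℝ e (y : EuclideanSpace ℝ (Fin n)) ^ 2 =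
          ∑ i ∈ Finset.univ.erase 0, inner ℝ (b i) (y : EuclideanSpace ℝ (Fin n)) ^ 2 := fun y => by
      have h1 := b.sum_sq_norm_inner_right (y : EuclideanSpace ℝ (Fin n))
      rw [norm_eq_of_mem_sphere, ← Finset.add_sum_erase _ _ (Finset.mem_univ 0), hb0] at h1
      simp only [Real.norm_eq_abs, sq_abs] at h1
      linarith
    simp only [hsum, Finset.sum_mul]
    rw [integral_finsetSum _ fun i _ => integrable_of_continuous (by fun_prop)]
    rw [Finset.sum_congr rfl fun i hi => (integral_inner_mul_eq_integral_sq_mul he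
      (b.orthonormal.1 i) (by rw [← hb0]; exact b.orthonormal.2 (Finset.ne_of_mem_erase hi).symm)
      hh' hh).symm]
    rw [Finset.sum_const, Finset.card_erase_of_mem (Finset.mem_univ _), Finset.card_univ,
      Fintype.card_fin, nsmul_eq_mul, Nat.cast_sub NeZero.one_le]
    push_cast
    ring

theorem integral_norm_add_smul_rpow (x : EuclideanSpace ℝ (Fin n)) (hx : x ≠ 0) (a p : ℝ) :
    ∫ y : sphere (0 : EuclideanSpace ℝ (Fin n)) 1,
        ‖x + a • (y : EuclideanSpace ℝ (Fin n))‖ ^ p ∂(sphereHaar n) =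
      ‖x‖ ^ p * moment (sphereHaar n)
        (fun y : sphere (0 : EuclideanSpace ℝ (Fin n)) 1 =>
          inner ℝ (‖x‖⁻¹ • x) (y : EuclideanSpace ℝ (Fin n))) (p / 2) (a / ‖x‖) := by
  have hx0 : 0 < ‖x‖ := norm_pos_iff.2 hx
  have hsq : ∀ {b : ℝ}, 0 ≤ b → b ^ p = (b ^ 2) ^ (p / 2) := fun hb => by
    rw [← Real.rpow_natCast, ← Real.rpow_mul hb]
    congr 1
    push_cast
    ring
  rw [moment, ← integral_const_mul]
  refine integral_congr_ae (.of_forall fun y => ?_)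
  simp only
  have h : ‖x + a • (y : EuclideanSpace ℝ (Fin n))‖ ^ 2 = ‖x‖ ^ 2 *
      (1 + (a / ‖x‖) ^ 2 + 2 * (a / ‖x‖) * inner ℝ (‖x‖⁻¹ • x) (y : EuclideanSpace ℝ (Fin n))) := by
    rw [norm_add_sq_real, norm_smul, norm_eq_of_mem_sphere, inner_smul_left, inner_smul_right]
    simp
    field_simp
    ring
  rw [hsq (norm_nonneg _), hsq (norm_nonneg x), h, Real.mul_rpow (sq_nonneg _)]
  refine nonneg_of_mul_nonneg_right (a := ‖x‖ ^ 2) ?_ (by positivity)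
  rw [← h]
  positivity

theorem integral_norm_add_smul_rpow_abs (x : EuclideanSpace ℝ (Fin n)) (a : ℝ) {p : ℝ}
    (hp : 0 ≤ p) :
    ∫ y : sphere (0 : EuclideanSpace ℝ (Fin n)) 1,
        ‖x + |a| • (y : EuclideanSpace ℝ (Fin n))‖ ^ p ∂(sphereHaar n) =
      ∫ y : sphere (0 : EuclideanSpace ℝ (Fin n)) 1,
        ‖x + a • (y : EuclideanSpace ℝ (Fin n))‖ ^ p ∂(sphereHaar n) := by
  rcases abs_choice a with h | h
  · rw [h]
  · have := integral_sphereHaar_comp_linearIsometryEquiv (LinearIsometryEquiv.neg ℝ)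
      (F := fun y : EuclideanSpace ℝ (Fin n) => ‖x + a • y‖ ^ p)
      ((Real.continuous_rpow_const hp).comp (by fun_prop))
    rw [h, ← this]
    simp

end Sphere

theorem stmt_13 (n : ℕ) (hn : 2 ≤ n) (p q : ℝ) (hp : 6 ≤ p) (hpq : p ≤ q) (r : ℝ)
    (hr : |r| ≤ Real.sqrt ((p + (n : ℝ) - 2) / (q + (n : ℝ) - 2)))
    (x : EuclideanSpace ℝ (Fin n)) (a : ℝ) :
    (∫ y : sphere (0 : EuclideanSpace ℝ (Fin n)) 1,
        ‖x + (a * r) • (y : EuclideanSpace ℝ (Fin n))‖ ^ q ∂(sphereHaar n)) ^ (1 / q) ≤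
      (∫ y : sphere (0 : EuclideanSpace ℝ (Fin n)) 1,
        ‖x + a • (y : EuclideanSpace ℝ (Fin n))‖ ^ p ∂(sphereHaar n)) ^ (1 / p) := by
  have hn' : (2 : ℝ) ≤ n := by exact_mod_cast hn
  have : NeZero n := ⟨by omega⟩
  have hq : 6 ≤ q := hp.trans hpq
  rcases eq_or_ne x 0 with rfl | hx
  · have hr1 : |r| ≤ 1 := hr.trans (Real.sqrt_le_one.2
      ((div_le_one (by linarith)).2 (by linarith)))
    simp only [zero_add, norm_smul, norm_eq_of_mem_sphere, mul_one, integral_const, probReal_univ,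
      one_smul, Real.norm_eq_abs]
    rw [← Real.rpow_mul (abs_nonneg _), ← Real.rpow_mul (abs_nonneg _),
      mul_one_div_cancel (by linarith), mul_one_div_cancel (by linarith), Real.rpow_one,
      Real.rpow_one, abs_mul]
    exact mul_le_of_le_one_right (abs_nonneg a) hr1
  have hx0 : 0 < ‖x‖ := norm_pos_iff.2 hx
  have hν : (0 : ℝ) ≤ n / 2 - 1 := by linarith
  have ht := isUltraspherical_inner (n := n) (e := ‖x‖⁻¹ • x) (by simp [norm_smul, hx])
  have hfrac : (p + (n : ℝ) - 2) / (q + n - 2) = (p / 2 + (n / 2 - 1)) / (q / 2 + (n / 2 - 1)) := by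
    rw [div_eq_div_iff (by linarith) (by linarith)]
    ring
  rw [hfrac] at hr
  have hroot : ∀ {b p : ℝ}, 6 ≤ p → (∫ y : sphere (0 : EuclideanSpace ℝ (Fin n)) 1,
      ‖x + b • (y : EuclideanSpace ℝ (Fin n))‖ ^ p ∂(sphereHaar n)) ^ (1 / p) =
      ‖x‖ * (moment (sphereHaar n) (fun y : sphere (0 : EuclideanSpace ℝ (Fin n)) 1 =>
          inner ℝ (‖x‖⁻¹ • x) (y : EuclideanSpace ℝ (Fin n))) (p / 2) (|b| / ‖x‖) ^
            (1 / (p / 2))) ^ (1 / 2 : ℝ) := fun {b p} hp => by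
    have h0 := ht.moment_pos hν (k := p / 2) (by linarith) (|b| / ‖x‖)
    rw [← integral_norm_add_smul_rpow_abs x b (by linarith), integral_norm_add_smul_rpow x hx,
      Real.mul_rpow (by positivity) h0.le, ← Real.rpow_mul hx0.le, ← Real.rpow_mul h0.le,
      mul_one_div_cancel (by linarith), Real.rpow_one]
    congr 2
    field_simp
  rw [hroot hq, hroot hp]
  have hpos := fun ρ => (ht.moment_pos hν (k := q / 2) (by linarith) ρ).le
  refine mul_le_mul_of_nonneg_left (Real.rpow_le_rpow (Real.rpow_nonneg (hpos _) _) ?_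
    (by norm_num)) hx0.le
  refine le_trans (Real.rpow_le_rpow (hpos _) ?_ (by positivity))
    (ht.moment_rpow_le hν (k := p / 2) (l := q / 2) (by linarith) (by linarith) (by positivity))
  refine ht.monotoneOn_moment hν (by linarith) (Set.mem_Ici.2 (by positivity))
    (Set.mem_Ici.2 (by positivity)) ?_
  rw [abs_mul, mul_div_right_comm]
  gcongr
end
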